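/- arXiv:1006.4318 — 2 statements merged into one kernel-verified Lean document; each statement's English description precedes it below -/
import Mathlib

section
/- For any ε > 0 there exists δ > 0 with the following property. Let 𝒢 ⊂ S²×S² be a measurable set with (σ×σ)((S²×S²)∖𝒢) < δ. Let φ : S² → ℝ and ψ : B(0,2) → ℝ be measurable functions satisfying |e^{i[φ(x)+φ(x')]} − e^{iψ(x+x')}| < δ for all (x,x') ∈ 𝒢. Then there exist a measurable set ℰ ⊂ B(0,2)×B(0,2) with Lebesgue measure |ℰ| < ε and a measurable function h : B(0,4) → ℂ such that |e^{i[ψ(z)+ψ(z')]} − h(z+z')| < ε for all (z,z') ∈ (B(0,2)×B(0,2))∖ℰ. -/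
open MeasureTheory Metric Filter
open scoped ENNReal RealInnerProductSpace

noncomputable section

/-- `ℝ³`, i.e. three-dimensional Euclidean space. -/
abbrev E3 : Type := EuclideanSpace ℝ (Fin 3)

/-- The unit sphere `S² ⊂ ℝ³`. -/
def sph : Set E3 := Metric.sphere 0 1

/-- Surface measure `σ` on the unit sphere `S²`, realized as the two-dimensional
Hausdorff measure on `ℝ³` restricted to the sphere. -/
def sphMeasure : Measure E3 := (μH[2]).restrict sph

open scoped Topology
open Module NormedSpace

/-!
If no `δ` works, a sequence of counterexamples whose errors are summable gives, for almost every
`(x, y)` in `S × S`, the equation `U x * U y = V (x + y)` in the commutative group of sequences of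
unit complex numbers modulo sequences tending to `1`.

Take four points of the sphere and reflect `x₂, x₃` in a hyperplane containing `x₂ + x₃`, which
gives `w₂, w₃` with `w₂ + w₃ = x₂ + x₃`. With `s = x₁ + x₂ + x₃ + x₄`, `z = x₁ + x₂` and
`w = x₁ + w₂`,
`V z * V (s - z) = U x₁ * (U x₂ * U x₃) * U x₄ = U x₁ * (U w₂ * U w₃) * U x₄ = V w * V (s - w)`.
The map sending such a configuration to `(s, z, w)` is a submersion at suitable points, so
`z ↦ V z * V (s - z)` is locally almost everywhere constant on the lens of those `z` for which `z`
and `s - z` both lie in the ball of radius `2`. The lens is connected, so the constancy is global,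
and `h s` is taken to be the average over the lens.
-/

section AlmostEverywhereNear

lemma eventually_nhds_inf_ae {X : Type*} [TopologicalSpace X] [MeasurableSpace X] {μ : Measure X}
    {x : X} {p : X → Prop} :
    (∀ᶠ y in 𝓝 x ⊓ ae μ, p y) ↔ ∃ U ∈ 𝓝 x, ∀ᵐ y ∂μ, y ∈ U → p y := by
  rw [eventually_inf]
  refine exists_congr fun U => and_congr_right fun _ => ⟨?_, fun h => ⟨_, h, fun y hy => hy.2 hy.1⟩⟩
  rintro ⟨t, ht, h⟩
  filter_upwards [ht] with y hyt hyU using h y ⟨hyU, hyt⟩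

lemma eventually_eventually_nhds_inf_ae {X : Type*} [TopologicalSpace X] [MeasurableSpace X]
    {μ : Measure X} {x : X} {p : X → Prop} (h : ∀ᶠ y in 𝓝 x ⊓ ae μ, p y) :
    ∀ᶠ x' in 𝓝 x, ∀ᶠ y in 𝓝 x' ⊓ ae μ, p y := by
  obtain ⟨U, hU, h⟩ := eventually_nhds_inf_ae.1 h
  filter_upwards [eventually_mem_nhds_iff.2 hU] with x' hx'
  exact eventually_nhds_inf_ae.2 ⟨U, hx', h⟩

lemma ae_of_forall_eventually_nhds_inf_ae {X : Type*} [TopologicalSpace X]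
    [SecondCountableTopology X] [MeasurableSpace X] {μ : Measure X} {s : Set X} {p : X → Prop}
    (h : ∀ x ∈ s, ∀ᶠ y in 𝓝 x ⊓ ae μ, p y) : ∀ᵐ y ∂μ, y ∈ s → p y := by
  refine measure_null_of_locally_null {y | ¬(y ∈ s → p y)} fun x hx => ?_
  obtain ⟨U, hU, hp⟩ := eventually_nhds_inf_ae.1 (h x (Classical.not_imp.1 hx).1)
  refine ⟨_, inter_mem self_mem_nhdsWithin (mem_nhdsWithin_of_mem_nhds hU),
    measure_mono_null ?_ hp⟩
  exact fun y hy hpy => (Classical.not_imp.1 hy.1).2 (hpy hy.2)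

lemma eventually_eventually_of_prod {X Y : Type*} [TopologicalSpace X] [TopologicalSpace Y]
    [MeasurableSpace X] [MeasurableSpace Y] {μ : Measure X} {ν : Measure Y} [SFinite ν]
    {a : X} {b : Y} {p : X × Y → Prop} (h : ∀ᶠ q in 𝓝 (a, b) ⊓ ae (μ.prod ν), p q) :
    ∀ᶠ x in 𝓝 a ⊓ ae μ, ∀ᶠ y in 𝓝 b ⊓ ae ν, p (x, y) := by
  obtain ⟨U, hU, h⟩ := eventually_nhds_inf_ae.1 h
  obtain ⟨V, hV, W, hW, hVW⟩ := mem_nhds_prod_iff.1 hU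
  refine eventually_nhds_inf_ae.2 ⟨V, hV, ?_⟩
  filter_upwards [Measure.ae_ae_of_ae_prod h] with x hx hxV
  refine eventually_nhds_inf_ae.2 ⟨W, hW, ?_⟩
  filter_upwards [hx] with y hy hyW using hy (hVW ⟨hxV, hyW⟩)

instance neBot_nhds_inf_ae {X : Type*} [TopologicalSpace X] [MeasurableSpace X]
    (μ : Measure X) [μ.IsOpenPosMeasure] (x : X) : (𝓝 x ⊓ ae μ).NeBot :=
  inf_neBot_iff.2 fun _ hU _ ht => mem_closure_iff_nhds.1 (Measure.dense_of_ae ht x) _ hU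

lemma tendsto_nhds_inf_ae {X Y : Type*} [TopologicalSpace X] [TopologicalSpace Y]
    [MeasurableSpace X] [MeasurableSpace Y] {μ : Measure X} {ν : Measure Y} {f : X → Y}
    (hf : Measure.QuasiMeasurePreserving f μ ν) {x : X} (hx : ContinuousAt f x) :
    Tendsto f (𝓝 x ⊓ ae μ) (𝓝 (f x) ⊓ ae ν) :=
  Tendsto.inf hx hf.tendsto_ae

variable {P Q : Type*} [NormedAddCommGroup P] [NormedSpace ℝ P] [FiniteDimensional ℝ P]
  [MeasurableSpace P] [BorelSpace P] [NormedAddCommGroup Q] [NormedSpace ℝ Q]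
  [MeasurableSpace Q] [BorelSpace Q]
  (μ : Measure P) [μ.IsAddHaarMeasure] (ν : Measure Q) [ν.IsAddHaarMeasure]

lemma quasiMeasurePreserving_of_isLinearMap {f : P → Q} (hf : IsLinearMap ℝ f)
    (hsurj : Function.Surjective f) : Measure.QuasiMeasurePreserving f μ ν := by
  let L := hf.mk' f
  obtain ⟨c, -, hc⟩ := L.exists_map_addHaar_eq_smul_addHaar μ ν hsurj
  refine ⟨L.continuous_of_finiteDimensional.measurable, ?_⟩
  change μ.map L ≪ ν
  rw [hc]
  exact Measure.smul_absolutelyContinuous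

variable [FiniteDimensional ℝ Q]

lemma measure_image_eq_zero_of_differentiableOn
    (h : finrank ℝ P = finrank ℝ Q) {f : P → Q}
    {s : Set P} (hf : DifferentiableOn ℝ f s) (hs : μ s = 0) : ν (f '' s) = 0 := by
  let e : Q ≃L[ℝ] P := ContinuousLinearEquiv.ofFinrankEq h.symm
  have he : Measure.QuasiMeasurePreserving e ν μ :=
    quasiMeasurePreserving_of_isLinearMap ν μ e.toLinearEquiv.toLinearMap.isLinear e.surjective
  have hnull : μ ((e ∘ f) '' s) = 0 :=
    addHaar_image_eq_zero_of_differentiableOn_of_addHaar_eq_zero μ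
      (e.differentiable.comp_differentiableOn hf) hs
  rw [Set.image_comp] at hnull
  simpa only [e.injective.preimage_image] using he.preimage_null hnull

lemma ae_comp_of_leftInvOn (h : finrank ℝ P = finrank ℝ Q) {T : P → Q} {g : Q → P}
    {D : Set P} (hg : DifferentiableOn ℝ g (T '' D)) (hgT : Set.LeftInvOn g T D) {p : Q → Prop}
    (hp : ∀ᵐ y ∂ν, p y) : ∀ᵐ x ∂μ, x ∈ D → p (T x) := by
  have hnull := measure_image_eq_zero_of_differentiableOn ν μ h.symm
    (hg.mono Set.inter_subset_right) (measure_inter_null_of_null_left (T '' D) hp)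
  filter_upwards [measure_eq_zero_iff_ae_notMem.1 hnull] with x hx hxD
  by_contra hpx
  exact hx ⟨T x, ⟨hpx, x, hxD, rfl⟩, hgT hxD⟩

lemma nhds_inf_ae_le_map (h : finrank ℝ P = finrank ℝ Q) {f : P → Q} {a : P}
    (hd : ∀ᶠ x in 𝓝 a, DifferentiableAt ℝ f x) (hf : 𝓝 (f a) ≤ map f (𝓝 a)) :
    𝓝 (f a) ⊓ ae ν ≤ map f (𝓝 a ⊓ ae μ) := by
  intro s hs
  obtain ⟨U, hU, hUs⟩ := eventually_nhds_inf_ae.1 (mem_map.1 hs)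
  have hUd : U ∩ {x | DifferentiableAt ℝ f x} ∈ 𝓝 a := inter_mem hU hd
  have hnull := measure_image_eq_zero_of_differentiableOn μ ν h
    (fun x hx => DifferentiableAt.differentiableWithinAt (𝕜 := ℝ) (f := f) hx.2.2)
    (measure_inter_null_of_null_left (U ∩ {x | DifferentiableAt ℝ f x}) hUs)
  refine eventually_nhds_inf_ae.2 ⟨_, hf (image_mem_map hUd), ?_⟩
  filter_upwards [measure_eq_zero_iff_ae_notMem.1 hnull]
  rintro _ hx ⟨x, hxU, rfl⟩
  by_contra hxs
  exact hx ⟨x, ⟨fun hxp => hxs (hxp hxU.1), hxU⟩, rfl⟩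

lemma nhds_inf_ae_le_map_of_surjective {f : P → Q} {f' : P →L[ℝ] Q} {a : P}
    (hf : HasStrictFDerivAt f f' a) (hd : ∀ᶠ x in 𝓝 a, DifferentiableAt ℝ f x)
    (hf' : Function.Surjective f') : 𝓝 (f a) ⊓ ae ν ≤ map f (𝓝 a ⊓ ae μ) := by
  obtain ⟨π, hπ⟩ := f'.ker_closedComplemented_of_finiteDimensional_range
  let e : P ≃L[ℝ] Q × f'.ker := f'.equivProdOfSurjectiveOfIsCompl π
    (LinearMap.range_eq_top.2 hf') (LinearMap.range_eq_of_proj hπ) (LinearMap.isCompl_of_proj hπ)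
  have hF : HasStrictFDerivAt (fun x => (f x, π x)) (e : P →L[ℝ] Q × f'.ker) a :=
    hf.prodMk π.hasStrictFDerivAt
  have hle := nhds_inf_ae_le_map μ (ν.prod (Measure.addHaar : Measure f'.ker))
    e.toLinearEquiv.finrank_eq (hd.mono fun x hx => hx.prodMk π.differentiableAt)
    hF.map_nhds_eq_of_equiv.ge
  intro s hs
  have hprod : ∀ᶠ q in 𝓝 (f a, π a) ⊓ ae (ν.prod (Measure.addHaar : Measure f'.ker)), q.1 ∈ s :=
    hle hs
  filter_upwards [eventually_eventually_of_prod hprod] with y hy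
  exact hy.exists.choose_spec

end AlmostEverywhereNear

section SurfaceMeasure

lemma hausdorffMeasure_image_eq_zero_of_contDiff {F G : Type*} [NormedAddCommGroup F]
    [NormedSpace ℝ F] [SecondCountableTopology F] [MeasurableSpace F] [BorelSpace F]
    [NormedAddCommGroup G] [NormedSpace ℝ G] [MeasurableSpace G] [BorelSpace G] {d : ℝ}
    (hd : 0 ≤ d) {f : F → G} {s : Set F} (hf : ∀ x ∈ s, ContDiffAt ℝ 1 f x) (hs : μH[d] s = 0) :
    μH[d] (f '' s) = 0 := by
  choose! K t ht hK using fun x hx => (hf x hx).exists_lipschitzOnWith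
  obtain ⟨c, hcs, hc, hsc⟩ := TopologicalSpace.countable_cover_nhdsWithin
    fun x hx => mem_nhdsWithin_of_mem_nhds (s := t x) (t := s) (ht x hx)
  have hcover : f '' s ⊆ ⋃ x ∈ c, f '' (s ∩ t x) := by
    rintro _ ⟨y, hy, rfl⟩
    obtain ⟨x, hx, hyx⟩ := Set.mem_iUnion₂.1 (hsc hy)
    exact Set.mem_iUnion₂.2 ⟨x, hx, y, ⟨hy, hyx⟩, rfl⟩
  refine measure_mono_null hcover ((measure_biUnion_null_iff hc).2 fun x hx => ?_)
  refine le_antisymm ?_ zero_le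
  calc μH[d] (f '' (s ∩ t x))
      ≤ K x ^ d * μH[d] (s ∩ t x) :=
        ((hK x (hcs hx)).mono Set.inter_subset_right).hausdorffMeasure_image_le hd
    _ = 0 := by rw [measure_inter_null_of_null_left _ hs, mul_zero]

/-- The surface measure of the unit sphere of a Euclidean space, viewed as a measure on the whole
space: the restriction to the sphere of the Hausdorff measure of codimension one. -/
def surfaceMeasure (E : Type*) [NormedAddCommGroup E] [InnerProductSpace ℝ E] [MeasurableSpace E]
    [BorelSpace E] : Measure E :=
  (μH[(finrank ℝ E : ℝ) - 1]).restrict (sphere 0 1)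

variable {E : Type*} [NormedAddCommGroup E] [InnerProductSpace ℝ E]

lemma stereoInvFunAux_stereoToFun {v x : E} (hv : ‖v‖ = 1) (hx : ‖x‖ = 1) (hxv : x ≠ v) :
    stereoInvFunAux v (stereoToFun v x : E) = x :=
  congrArg Subtype.val (stereo_left_inv hv (x := ⟨x, mem_sphere_zero_iff_norm.2 hx⟩) hxv)

lemma norm_stereoToFun_le {v x : E} (hx : ‖x‖ = 1) (hvx : ⟪v, x⟫ ≤ 0) : ‖stereoToFun v x‖ ≤ 2 := by
  have hcoe : 2 / (1 - ⟪v, x⟫) ≤ 2 := (div_le_iff₀ (by linarith)).2 (by linarith)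
  rw [stereoToFun_apply, innerSL_apply_apply, norm_smul,
    Real.norm_of_nonneg (div_nonneg zero_le_two (by linarith))]
  calc _ ≤ 2 * 1 := mul_le_mul hcoe
        ((Submodule.norm_orthogonalProjectionOnto_apply_le _ x).trans hx.le) (norm_nonneg _)
        zero_le_two
    _ = 2 := mul_one 2

variable [FiniteDimensional ℝ E]

lemma finrank_orthogonal_span_singleton_add_one {v : E} (hv : v ≠ 0) :
    finrank ℝ (ℝ ∙ v)ᗮ + 1 = finrank ℝ E := by
  rw [← (ℝ ∙ v).finrank_add_finrank_orthogonal, finrank_span_singleton hv, add_comm]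

variable [MeasurableSpace E] [BorelSpace E]

lemma isAddHaarMeasure_hausdorffMeasure_orthogonal {v : E} (hv : v ≠ 0) :
    (μH[(finrank ℝ E : ℝ) - 1] : Measure (ℝ ∙ v)ᗮ).IsAddHaarMeasure := by
  rw [← finrank_orthogonal_span_singleton_add_one hv, Nat.cast_add_one, add_sub_cancel_right]
  infer_instance

lemma hausdorffMeasure_hemisphere_lt_top {v : E} (hv : ‖v‖ = 1) :
    μH[(finrank ℝ E : ℝ) - 1] {x ∈ sphere (0 : E) 1 | ⟪v, x⟫ ≤ 0} < ∞ := by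
  have hv0 : v ≠ 0 := norm_ne_zero_iff.1 (hv.trans_ne one_ne_zero)
  have := isAddHaarMeasure_hausdorffMeasure_orthogonal hv0
  have hd : 0 ≤ (finrank ℝ E : ℝ) - 1 := by
    rw [← finrank_orthogonal_span_singleton_add_one hv0, Nat.cast_add_one, add_sub_cancel_right]
    exact Nat.cast_nonneg _
  let f : (ℝ ∙ v)ᗮ → E := fun y => stereoInvFunAux v (y : E)
  have hf : ContDiff ℝ 1 f := contDiff_stereoInvFunAux.comp (ℝ ∙ v)ᗮ.subtypeL.contDiff
  obtain ⟨K, hK⟩ := hf.contDiffOn.exists_lipschitzOnWith one_ne_zero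
    (convex_closedBall (0 : (ℝ ∙ v)ᗮ) 2) (isCompact_closedBall 0 2)
  have hsub : {x ∈ sphere (0 : E) 1 | ⟪v, x⟫ ≤ 0} ⊆ f '' closedBall 0 2 := by
    rintro x ⟨hx, hvx⟩
    have hx1 : ‖x‖ = 1 := mem_sphere_zero_iff_norm.1 hx
    refine ⟨stereoToFun v x, mem_closedBall_zero_iff.2 (norm_stereoToFun_le hx1 hvx),
      stereoInvFunAux_stereoToFun hv hx1 ?_⟩
    rintro rfl
    norm_num [real_inner_self_eq_norm_sq, hx1] at hvx
  calc μH[(finrank ℝ E : ℝ) - 1] {x ∈ sphere (0 : E) 1 | ⟪v, x⟫ ≤ 0}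
      ≤ μH[(finrank ℝ E : ℝ) - 1] (f '' closedBall 0 2) := measure_mono hsub
    _ ≤ K ^ ((finrank ℝ E : ℝ) - 1) * μH[(finrank ℝ E : ℝ) - 1] (closedBall (0 : (ℝ ∙ v)ᗮ) 2) :=
        hK.hausdorffMeasure_image_le hd
    _ < ∞ := ENNReal.mul_lt_top (ENNReal.rpow_lt_top_of_nonneg hd ENNReal.coe_ne_top)
        (isCompact_closedBall _ _).measure_lt_top

variable [Nontrivial E]

instance isFiniteMeasure_surfaceMeasure : IsFiniteMeasure (surfaceMeasure E) := by
  obtain ⟨v, hv⟩ := exists_norm_eq E zero_le_one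
  refine ⟨?_⟩
  rw [surfaceMeasure, Measure.restrict_apply_univ]
  refine (measure_mono fun x hx => ?_).trans_lt (measure_union_lt_top
    (hausdorffMeasure_hemisphere_lt_top hv)
    (hausdorffMeasure_hemisphere_lt_top ((norm_neg v).trans hv)))
  rcases le_total ⟪v, x⟫ 0 with h | h
  · exact Or.inl ⟨hx, h⟩
  · exact Or.inr ⟨hx, by rwa [inner_neg_left, neg_nonpos]⟩

lemma volume_cone_diff_singleton_eq_zero {v : E} (hv : ‖v‖ = 1) {A : Set E}
    (hA : μH[(finrank ℝ E : ℝ) - 1] A = 0) :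
    volume {x : E | x ≠ 0 ∧ normalize x ∈ A \ {v}} = 0 := by
  have hv0 : v ≠ 0 := norm_ne_zero_iff.1 (hv.trans_ne one_ne_zero)
  have := isAddHaarMeasure_hausdorffMeasure_orthogonal hv0
  have hd : 0 ≤ (finrank ℝ E : ℝ) - 1 := sub_nonneg.2 (Nat.one_le_cast.2 finrank_pos)
  let B : Set (ℝ ∙ v)ᗮ := stereoToFun v '' ((A ∩ sphere 0 1) \ {v})
  have hB : μH[(finrank ℝ E : ℝ) - 1] B = 0 := by
    refine hausdorffMeasure_image_eq_zero_of_contDiff hd (fun x hx => ?_)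
      (measure_mono_null (fun x hx => hx.1.1) hA)
    refine contDiffOn_stereoToFun.contDiffAt
      ((isOpen_ne_fun (by fun_prop) (by fun_prop)).mem_nhds ?_)
    rw [Set.mem_ofPred_eq, innerSL_apply_apply, Ne,
      inner_eq_one_iff_of_norm_eq_one hv (mem_sphere_zero_iff_norm.1 hx.1.2)]
    exact Ne.symm hx.2
  let f : (ℝ ∙ v)ᗮ × ℝ → E := fun q => q.2 • stereoInvFunAux v (q.1 : E)
  have hf : Differentiable ℝ f := differentiable_snd.smul
    ((contDiff_stereoInvFunAux (m := 1)).differentiable one_ne_zero |>.comp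
      ((ℝ ∙ v)ᗮ.subtypeL.differentiable.comp differentiable_fst))
  have hnull : (μH[(finrank ℝ E : ℝ) - 1] : Measure (ℝ ∙ v)ᗮ).prod (volume : Measure ℝ)
      (B ×ˢ Set.univ) = 0 := by
    rw [Measure.prod_prod, hB, zero_mul]
  refine measure_mono_null ?_ (measure_image_eq_zero_of_differentiableOn _ volume
    (finrank_prod.trans ?_) hf.differentiableOn hnull)
  · rintro x ⟨hx0, hxA, hxv⟩
    have hx1 : ‖normalize x‖ = 1 := norm_normalize hx0
    refine ⟨(stereoToFun v (normalize x), ‖x‖), ⟨Set.mem_image_of_mem _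
      ⟨⟨hxA, mem_sphere_zero_iff_norm.2 hx1⟩, hxv⟩, trivial⟩, ?_⟩
    simp only [f, stereoInvFunAux_stereoToFun hv hx1 hxv, norm_smul_normalize]
  · rw [finrank_self, finrank_orthogonal_span_singleton_add_one hv0]

lemma volume_cone_eq_zero {A : Set E} (hA : μH[(finrank ℝ E : ℝ) - 1] A = 0) :
    volume {x : E | x ≠ 0 ∧ normalize x ∈ A} = 0 := by
  obtain ⟨v, hv⟩ := exists_norm_eq E zero_le_one
  have hne : v ≠ -v := fun h =>
    ne_neg_of_mem_unit_sphere ℝ ⟨v, mem_sphere_zero_iff_norm.2 hv⟩ (Subtype.ext h)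
  refine measure_mono_null (fun x hx => ?_) (measure_union_null
    (volume_cone_diff_singleton_eq_zero hv hA)
    (volume_cone_diff_singleton_eq_zero ((norm_neg v).trans hv) hA))
  rcases eq_or_ne (normalize x) v with h | h
  · exact Or.inr ⟨hx.1, hx.2, fun h' => hne (h.symm.trans h')⟩
  · exact Or.inl ⟨hx.1, hx.2, h⟩

lemma measurable_normalize {F : Type*} [NormedAddCommGroup F] [NormedSpace ℝ F]
    [MeasurableSpace F] [BorelSpace F] [SecondCountableTopology F] :
    Measurable (NormedSpace.normalize : F → F) := by
  unfold NormedSpace.normalize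
  fun_prop

lemma quasiMeasurePreserving_normalize :
    Measure.QuasiMeasurePreserving NormedSpace.normalize (volume : Measure E)
      (surfaceMeasure E) := by
  refine ⟨measurable_normalize, Measure.AbsolutelyContinuous.mk fun s hs h0 => ?_⟩
  rw [surfaceMeasure, Measure.restrict_apply hs] at h0
  rw [Measure.map_apply measurable_normalize hs]
  refine measure_mono_null (fun x hx => ?_)
    (measure_union_null (measure_singleton 0) (volume_cone_eq_zero h0))
  rcases eq_or_ne x 0 with rfl | hx0
  · exact Or.inl rfl
  · exact Or.inr ⟨hx0, hx, mem_sphere_zero_iff_norm.2 (norm_normalize hx0)⟩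

end SurfaceMeasure

section Smoothness

variable {E F : Type*} [NormedAddCommGroup E] [InnerProductSpace ℝ E] [NormedAddCommGroup F]
  [NormedSpace ℝ F] {k : WithTop ℕ∞} {f g : F → E} {p : F}

lemma contDiffAt_normalize (hf : ContDiffAt ℝ k f p) (hp : f p ≠ 0) :
    ContDiffAt ℝ k (fun q => normalize (f q)) p :=
  ((hf.norm ℝ hp).inv (norm_ne_zero_iff.2 hp)).smul hf

lemma starProjection_orthogonal_singleton (n x : E) :
    (ℝ ∙ n)ᗮ.starProjection x = x - (⟪n, x⟫ / ‖n‖ ^ 2) • n := by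
  rw [Submodule.starProjection_orthogonal_val, Submodule.starProjection_singleton]
  rfl

/-- The reflection in the hyperplane orthogonal to `n`. -/
def mirror (n : E) : E ≃ₗᵢ[ℝ] E := (ℝ ∙ n)ᗮ.reflection

lemma mirror_apply (n x : E) : mirror n x = x - (2 * (⟪n, x⟫ / ‖n‖ ^ 2)) • n := by
  rw [mirror, Submodule.reflection_orthogonal_apply, Submodule.reflection_singleton_apply]
  simp only [RCLike.ofReal_real_eq_id, id, mul_smul, two_smul]
  abel

lemma contDiffAt_starProjection_orthogonal_singleton (hf : ContDiffAt ℝ k f p)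
    (hg : ContDiffAt ℝ k g p) (hp : f p ≠ 0) :
    ContDiffAt ℝ k (fun q => (ℝ ∙ f q)ᗮ.starProjection (g q)) p := by
  simp only [starProjection_orthogonal_singleton]
  exact hg.sub (((hf.inner ℝ hg).div (hf.norm_sq ℝ) (by simpa)).smul hf)

lemma contDiffAt_mirror (hf : ContDiffAt ℝ k f p)
    (hg : ContDiffAt ℝ k g p) (hp : f p ≠ 0) :
    ContDiffAt ℝ k (fun q => mirror (f q) (g q)) p := by
  simp only [mirror_apply]
  exact hg.sub ((contDiffAt_const.mul ((hf.inner ℝ hg).div (hf.norm_sq ℝ) (by simpa))).smul hf)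

lemma mirror_mirror (n x : E) : mirror n (mirror n x) = x :=
  Submodule.reflection_reflection _ x

lemma mirror_of_inner_eq_zero {n x : E} (h : ⟪n, x⟫ = 0) : mirror n x = x :=
  Submodule.reflection_mem_subspace_eq_self
    (Submodule.mem_orthogonal_singleton_iff_inner_right.2 h)

lemma normalize_map (L : E ≃ₗᵢ[ℝ] E) (x : E) : normalize (L x) = L (normalize x) := by
  rw [NormedSpace.normalize, NormedSpace.normalize, L.norm_map, map_smul]

end Smoothness

/-- A configuration `(x₁, x₂, x₃, x₄, e)` parametrizes four points of the unit sphere, the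
directions of `x₁, x₂, x₃, x₄`, together with a hyperplane containing the sum of the middle two,
whose normal is determined by `e`. -/
abbrev Configuration (E : Type*) : Type _ := E × E × E × E × E

namespace Configuration

variable {E : Type*} [NormedAddCommGroup E] [InnerProductSpace ℝ E]

/-- The sum of the two middle points. -/
def center (p : Configuration E) : E := normalize p.2.1 + normalize p.2.2.1

/-- A normal vector of the hyperplane of a configuration. -/
def normal (p : Configuration E) : E := (ℝ ∙ p.center)ᗮ.starProjection p.2.2.2.2

/-- Reflects the two middle points in the hyperplane of the configuration; their sum is fixed. -/
def flip (p : Configuration E) : Configuration E :=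
  (p.1, mirror p.normal p.2.1, mirror p.normal p.2.2.1, p.2.2.2)

/-- The configurations at which `flip` is smooth. -/
def regular (E : Type*) [NormedAddCommGroup E] [InnerProductSpace ℝ E] : Set (Configuration E) :=
  {p | p.2.1 ≠ 0 ∧ p.2.2.1 ≠ 0 ∧ p.center ≠ 0 ∧ p.normal ≠ 0}

/-- The sum of the first two points. -/
def left (p : Configuration E) : E := normalize p.1 + normalize p.2.1

/-- The sum of the last two points. -/
def right (p : Configuration E) : E := normalize p.2.2.1 + normalize p.2.2.2.1

/-- The sum of all four points, together with the sums of the first two before and after the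
flip. -/
def sums (p : Configuration E) : E × E × E := (p.left + p.right, p.left, p.flip.left)

lemma inner_normal_center (p : Configuration E) : ⟪p.normal, p.center⟫ = 0 :=
  Submodule.mem_orthogonal_singleton_iff_inner_left.1 (Submodule.starProjection_apply_mem _ _)

lemma center_flip (p : Configuration E) : p.flip.center = p.center := by
  have hfix : mirror p.normal p.center = p.center :=
    mirror_of_inner_eq_zero p.inner_normal_center
  conv_rhs => rw [← hfix, center, map_add, ← normalize_map, ← normalize_map]
  rfl

lemma normal_flip (p : Configuration E) : p.flip.normal = p.normal := by
  simp only [normal, center_flip]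
  rfl

lemma flip_flip (p : Configuration E) : p.flip.flip = p := by
  conv_lhs => rw [flip]
  rw [normal_flip]
  simp only [flip, mirror_mirror]

lemma flip_mem_regular {p : Configuration E} (hp : p ∈ regular E) : p.flip ∈ regular E := by
  obtain ⟨h₂, h₃, hc, hn⟩ := hp
  refine ⟨?_, ?_, by rwa [center_flip], by rwa [normal_flip]⟩ <;>
    simpa only [flip, Ne, LinearIsometryEquiv.map_eq_zero_iff]

lemma right_flip (p : Configuration E) : p.flip.right = p.left + p.right - p.flip.left := by
  have h := p.center_flip
  simp only [center, left, right] at h ⊢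
  rw [show p.flip.1 = p.1 from rfl, show p.flip.2.2.2.1 = p.2.2.2.1 from rfl]
  linear_combination (norm := module) h

lemma contDiffAt_center {k : WithTop ℕ∞} {p : Configuration E} (hp : p ∈ regular E) :
    ContDiffAt ℝ k center p :=
  (contDiffAt_normalize (f := fun q : Configuration E => q.2.1) (by fun_prop) hp.1).add
    (contDiffAt_normalize (f := fun q : Configuration E => q.2.2.1) (by fun_prop) hp.2.1)

lemma contDiffAt_normal {k : WithTop ℕ∞} {p : Configuration E} (hp : p ∈ regular E) :
    ContDiffAt ℝ k normal p :=
  contDiffAt_starProjection_orthogonal_singleton (contDiffAt_center hp) (by fun_prop) hp.2.2.1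

lemma contDiffAt_flip {k : WithTop ℕ∞} {p : Configuration E} (hp : p ∈ regular E) :
    ContDiffAt ℝ k flip p :=
  contDiffAt_fst.prodMk <|
    (contDiffAt_mirror (contDiffAt_normal hp) (by fun_prop)
      hp.2.2.2).prodMk <|
    (contDiffAt_mirror (contDiffAt_normal hp) (by fun_prop)
      hp.2.2.2).prodMk <| by fun_prop

lemma contDiffAt_sums {k : WithTop ℕ∞} {p : Configuration E} (hp : p ∈ regular E) (h₁ : p.1 ≠ 0)
    (h₄ : p.2.2.2.1 ≠ 0) : ContDiffAt ℝ k sums p := by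
  have hleft : ∀ q : Configuration E, q.1 ≠ 0 → q.2.1 ≠ 0 → ContDiffAt ℝ k left q :=
    fun q h₁ h₂ => (contDiffAt_normalize (by fun_prop) h₁).add
      (contDiffAt_normalize (by fun_prop) h₂)
  have hright : ContDiffAt ℝ k right p :=
    (contDiffAt_normalize (f := fun q : Configuration E => q.2.2.1) (by fun_prop) hp.2.1).add
      (contDiffAt_normalize (f := fun q : Configuration E => q.2.2.2.1) (by fun_prop) h₄)
  exact ((hleft p h₁ hp.1).add hright).prodMk ((hleft p h₁ hp.1).prodMk
    ((hleft p.flip h₁ (flip_mem_regular hp).1).comp p (contDiffAt_flip hp)))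

lemma isOpen_regular : IsOpen (regular E) := by
  refine isOpen_iff_mem_nhds.2 fun p hp => ?_
  filter_upwards [(continuous_fst.comp continuous_snd).continuousAt.eventually_ne hp.1,
    (continuous_fst.comp (continuous_snd.comp continuous_snd)).continuousAt.eventually_ne hp.2.1,
    (contDiffAt_center (k := 0) hp).continuousAt.eventually_ne hp.2.2.1,
    (contDiffAt_normal (k := 0) hp).continuousAt.eventually_ne hp.2.2.2] with q h₂ h₃ hc hn
  exact ⟨h₂, h₃, hc, hn⟩

section Multiplicative

variable {A : Type*} [Semigroup A]

/-- The identity `U x * U y = V (x + y)` holds for each pair of consecutive points of the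
configuration. -/
def IsMultiplicative (U V : E → A) (p : Configuration E) : Prop :=
  U (normalize p.1) * U (normalize p.2.1) = V p.left ∧
    U (normalize p.2.1) * U (normalize p.2.2.1) = V p.center ∧
    U (normalize p.2.2.1) * U (normalize p.2.2.2.1) = V p.right

/-- Regrouping around the common central product `U x₂ * U x₃` exchanges the two
decompositions. -/
lemma IsMultiplicative.mul_eq_mul {U V : E → A} {p : Configuration E}
    (h : IsMultiplicative U V p) (h' : IsMultiplicative U V p.flip) :
    V p.left * V p.right = V p.flip.left * V p.flip.right := by
  obtain ⟨h₁₂, h₂₃, h₃₄⟩ := h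
  obtain ⟨h₁₂', h₂₃', h₃₄'⟩ := h'
  calc V p.left * V p.right
      = U (normalize p.1) * (U (normalize p.2.1) * U (normalize p.2.2.1)) *
          U (normalize p.2.2.2.1) := by rw [← h₁₂, ← h₃₄]; simp only [mul_assoc]
    _ = U (normalize p.flip.1) * (U (normalize p.flip.2.1) * U (normalize p.flip.2.2.1)) *
          U (normalize p.flip.2.2.2.1) := by rw [h₂₃, h₂₃', center_flip]; rfl
    _ = V p.flip.left * V p.flip.right := by rw [← h₁₂', ← h₃₄']; simp only [mul_assoc]

end Multiplicative

end Configuration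

section PreconnectedDiff

variable {E : Type*} [NormedAddCommGroup E] [NormedSpace ℝ E]

lemma mem_affineSpan_pair_of_mem_segment {x y z : E} (hx : x ∈ segment ℝ z y) (hxz : x ≠ z) :
    y ∈ line[ℝ, z, x] := by
  rw [segment_eq_image_lineMap] at hx
  obtain ⟨t, -, rfl⟩ := hx
  have ht : t ≠ 0 := fun ht => hxz (by rw [ht, AffineMap.lineMap_apply_zero])
  have hy := AffineMap.lineMap_mem_affineSpan_pair t⁻¹ z (AffineMap.lineMap z y t)
  rwa [AffineMap.lineMap_lineMap_right, inv_mul_cancel₀ ht, AffineMap.lineMap_apply_one] at hy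

variable [FiniteDimensional ℝ E]

lemma ae_notMem_affineSpan_pair [MeasurableSpace E] [BorelSpace E] (μ : Measure E)
    [μ.IsAddHaarMeasure] (hE : 1 < finrank ℝ E) (a b : E) : ∀ᵐ y ∂μ, y ∉ line[ℝ, a, b] := by
  refine measure_eq_zero_iff_ae_notMem.1 (Measure.addHaar_affineSubspace μ _ fun h => hE.not_ge ?_)
  have hcol := collinear_iff_finrank_le_one.1 (collinear_pair ℝ a b)
  rwa [← direction_affineSpan, h, AffineSubspace.direction_top, finrank_top] at hcol

lemma isPreconnected_diff_countable (hE : 1 < finrank ℝ E) {C D : Set E} (hC : Convex ℝ C)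
    (hCo : IsOpen C) (hD : D.Countable) : IsPreconnected (C \ D) := by
  borelize E
  refine isPreconnected_of_forall_pair fun z hz w hw => ?_
  have hae : ∀ a : E, ∀ᵐ y ∂(Measure.addHaar : Measure E), ∀ d ∈ D, y ∉ line[ℝ, a, d] :=
    fun a => (ae_ball_iff hD).2 fun d _ => ae_notMem_affineSpan_pair _ hE a d
  obtain ⟨y, ⟨hyz, hyw⟩, hyC⟩ :=
    (Measure.dense_of_ae ((hae z).and (hae w))).inter_nhds_nonempty (hCo.mem_nhds hz.1)
  have hsub : ∀ a ∈ C \ D, (∀ d ∈ D, y ∉ line[ℝ, a, d]) → segment ℝ a y ⊆ C \ D :=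
    fun a ha hy x hx => ⟨hC.segment_subset ha.1 hyC hx, fun hxD =>
      hy x hxD (mem_affineSpan_pair_of_mem_segment hx fun hxa => ha.2 (hxa ▸ hxD))⟩
  refine ⟨segment ℝ z y ∪ segment ℝ w y, Set.union_subset (hsub z hz hyz) (hsub w hw hyw),
    Or.inl (left_mem_segment ℝ z y), Or.inr (left_mem_segment ℝ w y), ?_⟩
  exact (convex_segment z y).isPreconnected.union y (right_mem_segment ℝ z y)
    (right_mem_segment ℝ w y) (convex_segment w y).isPreconnected

end PreconnectedDiff

instance isAddHaarMeasure_volume_prod {E F : Type*} [NormedAddCommGroup E] [NormedSpace ℝ E]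
    [FiniteDimensional ℝ E] [MeasureSpace E] [BorelSpace E]
    [(volume : Measure E).IsAddHaarMeasure] [NormedAddCommGroup F] [NormedSpace ℝ F]
    [FiniteDimensional ℝ F] [MeasureSpace F] [BorelSpace F]
    [(volume : Measure F).IsAddHaarMeasure] : (volume : Measure (E × F)).IsAddHaarMeasure :=
  Measure.prod.instIsAddHaarMeasure volume volume

/-- The decompositions `s = z + (s - z)` into two vectors of the ball of radius `2`, without the two
degenerate ones. -/
def lens {E : Type*} [NormedAddCommGroup E] (s : E) : Set E := (ball 0 2 ∩ ball s 2) \ {0, s}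

lemma isOpen_lens {E : Type*} [NormedAddCommGroup E] (s : E) : IsOpen (lens s) :=
  (isOpen_ball.inter isOpen_ball).sdiff (Set.toFinite {0, s}).isClosed

section AgreesNear

variable {E : Type*} [NormedAddCommGroup E] [NormedSpace ℝ E] [FiniteDimensional ℝ E]
  [MeasureSpace E] [BorelSpace E] [(volume : Measure E).IsAddHaarMeasure] {B : Type*}
  {f : E → E → B}

/-- For almost all `s'` near `s`, the function `f s'` takes one and the same value at almost all
points near `z` and near `w`. -/
def AgreesNear (f : E → E → B) (s z w : E) : Prop :=
  ∀ᶠ q : E × E × E in 𝓝 (s, z, w) ⊓ ae volume, f q.1 q.2.1 = f q.1 q.2.2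

lemma AgreesNear.symm {s z w : E} (h : AgreesNear f s z w) : AgreesNear f s w z := by
  have hswap := quasiMeasurePreserving_of_isLinearMap (volume : Measure (E × E × E)) volume
    (f := fun q : E × E × E => (q.1, q.2.2, q.2.1)) ⟨fun _ _ => rfl, fun _ _ => rfl⟩
    fun q => ⟨(q.1, q.2.2, q.2.1), rfl⟩
  exact ((tendsto_nhds_inf_ae hswap (x := (s, w, z)) (by fun_prop)).eventually h).mono
    fun _ hq => hq.symm

lemma AgreesNear.trans {s z w y : E} (h : AgreesNear f s z w) (h' : AgreesNear f s w y) :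
    AgreesNear f s z y := by
  have hzw := quasiMeasurePreserving_of_isLinearMap (volume : Measure ((E × E × E) × E)) volume
    (f := fun q : (E × E × E) × E => (q.1.1, q.1.2.1, q.2)) ⟨fun _ _ => rfl, fun _ _ => rfl⟩
    fun q => ⟨((q.1, q.2.1, 0), q.2.2), rfl⟩
  have hwy := quasiMeasurePreserving_of_isLinearMap (volume : Measure ((E × E × E) × E)) volume
    (f := fun q : (E × E × E) × E => (q.1.1, q.2, q.1.2.2)) ⟨fun _ _ => rfl, fun _ _ => rfl⟩
    fun q => ⟨((q.1, 0, q.2.2), q.2.1), rfl⟩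
  have hboth : ∀ᶠ q : (E × E × E) × E in 𝓝 ((s, z, y), w) ⊓ ae (volume.prod volume),
      f q.1.1 q.1.2.1 = f q.1.1 q.1.2.2 := by
    filter_upwards [
      (tendsto_nhds_inf_ae hzw (x := ((s, z, y), w)) (by fun_prop)).eventually h,
      (tendsto_nhds_inf_ae hwy (x := ((s, z, y), w)) (by fun_prop)).eventually h']
      with q hq hq' using hq.trans hq'
  exact (eventually_eventually_of_prod hboth).mono fun q hq => hq.exists.choose_spec

lemma agreesNear_of_isPreconnected {s : E} {C : Set E} (hC : IsPreconnected C)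
    (h : ∀ z ∈ C, ∃ w, AgreesNear f s z w) {z w : E} (hz : z ∈ C) (hw : w ∈ C) :
    AgreesNear f s z w := by
  refine hC.induction₂ (AgreesNear f s) (fun x hx => ?_) (fun _ _ _ _ _ _ => AgreesNear.trans)
    (fun _ _ _ _ => AgreesNear.symm) hz hw
  obtain ⟨y, hy⟩ := h x hx
  have hnear : Tendsto (fun b : E => (s, x, b)) (𝓝[C] x) (𝓝 (s, x, x)) :=
    tendsto_nhdsWithin_of_tendsto_nhds (Continuous.tendsto (by fun_prop) x)
  exact hnear.eventually (eventually_eventually_nhds_inf_ae (hy.trans hy.symm))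

lemma ae_eq_of_forall_mem_lens (hE : 1 < finrank ℝ E)
    (h : ∀ s, ∀ z ∈ lens s, ∃ w, AgreesNear f s z w) :
    ∀ᵐ q : E × E × E, q.2.1 ∈ lens q.1 ∧ q.2.2 ∈ lens q.1 → f q.1 q.2.1 = f q.1 q.2.2 :=
  ae_of_forall_eventually_nhds_inf_ae (s := {q : E × E × E | q.2.1 ∈ lens q.1 ∧ q.2.2 ∈ lens q.1})
    fun q hq => agreesNear_of_isPreconnected (isPreconnected_diff_countable hE
      ((convex_ball _ _).inter (convex_ball _ _)) (isOpen_ball.inter isOpen_ball)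
      (Set.toFinite _).countable) (h q.1) hq.1 hq.2

end AgreesNear

namespace Configuration

variable {E : Type*} [NormedAddCommGroup E] [InnerProductSpace ℝ E] [FiniteDimensional ℝ E]
  [MeasurableSpace E] [BorelSpace E]

instance : (volume : Measure (Configuration E)).IsAddHaarMeasure := isAddHaarMeasure_volume_prod

variable [Nontrivial E] {A : Type*} [Semigroup A] {U V : E → A}

lemma ae_isMultiplicative (hUV : ∀ᵐ q ∂(surfaceMeasure E).prod (surfaceMeasure E),
    U q.1 * U q.2 = V (q.1 + q.2)) : ∀ᵐ p : Configuration E, p.IsMultiplicative U V := by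
  have hdir : ∀ᵐ q : E × E, U (normalize q.1) * U (normalize q.2) =
      V (normalize q.1 + normalize q.2) :=
    (QuasiMeasurePreserving.prodMap quasiMeasurePreserving_normalize
      quasiMeasurePreserving_normalize).ae hUV
  have h₁₂ := quasiMeasurePreserving_of_isLinearMap (volume : Measure (Configuration E)) volume
    (f := fun p : Configuration E => (p.1, p.2.1)) ⟨fun _ _ => rfl, fun _ _ => rfl⟩
    fun q => ⟨(q.1, q.2, 0), rfl⟩
  have h₂₃ := quasiMeasurePreserving_of_isLinearMap (volume : Measure (Configuration E)) volume
    (f := fun p : Configuration E => (p.2.1, p.2.2.1)) ⟨fun _ _ => rfl, fun _ _ => rfl⟩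
    fun q => ⟨(0, q.1, q.2, 0), rfl⟩
  have h₃₄ := quasiMeasurePreserving_of_isLinearMap (volume : Measure (Configuration E)) volume
    (f := fun p : Configuration E => (p.2.2.1, p.2.2.2.1)) ⟨fun _ _ => rfl, fun _ _ => rfl⟩
    fun q => ⟨(0, 0, q.1, q.2, 0), rfl⟩
  filter_upwards [h₁₂.ae hdir, h₂₃.ae hdir, h₃₄.ae hdir] with p hp₁₂ hp₂₃ hp₃₄
    using ⟨hp₁₂, hp₂₃, hp₃₄⟩

lemma ae_mul_eq_mul (hUV : ∀ᵐ q ∂(surfaceMeasure E).prod (surfaceMeasure E),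
    U q.1 * U q.2 = V (q.1 + q.2)) :
    ∀ᵐ p : Configuration E, p ∈ regular E →
      V p.sums.2.1 * V (p.sums.1 - p.sums.2.1) = V p.sums.2.2 * V (p.sums.1 - p.sums.2.2) := by
  have hmul := ae_isMultiplicative hUV
  have hmul' : ∀ᵐ p : Configuration E, p ∈ regular E → p.flip.IsMultiplicative U V := by
    refine ae_comp_of_leftInvOn volume volume rfl (g := flip) ?_ (fun p _ => p.flip_flip) hmul
    rintro _ ⟨p, hp, rfl⟩
    exact ((contDiffAt_flip (flip_mem_regular hp)).differentiableAt
      one_ne_zero).differentiableWithinAt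
  filter_upwards [hmul, hmul'] with p hp hp' hreg
  simp only [sums, add_sub_cancel_left, ← right_flip]
  exact hp.mul_eq_mul (hp' hreg)

end Configuration

section Derivatives

variable {E F : Type*} [NormedAddCommGroup E] [InnerProductSpace ℝ E] [NormedAddCommGroup F]
  [NormedSpace ℝ F]

lemma inner_hasFDerivAt_eq_zero_of_norm_eq {f : F → E} {f' : F →L[ℝ] E} {p : F} {r : ℝ}
    (hf : HasFDerivAt f f' p) (hr : ∀ᶠ q in 𝓝 p, ‖f q‖ = r) (d : F) : ⟪f p, f' d⟫ = 0 := by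
  have hconst : (fun q => ‖f q‖ ^ 2) =ᶠ[𝓝 p] fun _ => r ^ 2 :=
    hr.mono fun q hq => by simp only [hq]
  simpa using DFunLike.congr_fun
    (hf.norm_sq.unique ((hasFDerivAt_const (r ^ 2) p).congr_of_eventuallyEq hconst)) d

lemma hasFDerivAt_normalize {x : E} (hx : ‖x‖ = 1) :
    HasFDerivAt NormedSpace.normalize ((ℝ ∙ x)ᗮ.starProjection) x := by
  have hinv : HasFDerivAt (fun y : E => (√(‖y‖ ^ 2))⁻¹) (-innerSL ℝ x) x := by
    refine ((hasDerivAt_inv (by simp [hx])).comp_hasFDerivAt x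
      ((hasFDerivAt_id x).norm_sq.sqrt (by simp [hx]))).congr_fderiv ?_
    ext d
    simp [hx]
  refine ((hinv.smul (hasFDerivAt_id x)).congr_of_eventuallyEq ?_).congr_fderiv ?_
  · exact Eventually.of_forall fun y => by simp [NormedSpace.normalize, Real.sqrt_sq]
  · ext d
    rw [starProjection_orthogonal_singleton]
    simp [hx, sub_eq_add_neg]

lemma starProjection_orthogonal_of_inner_eq_zero {x d : E} (h : ⟪x, d⟫ = 0) :
    (ℝ ∙ x)ᗮ.starProjection d = d := by
  rw [starProjection_orthogonal_singleton, h, zero_div, zero_smul, sub_zero]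

lemma hasDerivAt_mirror {m g x : E} (hm : ‖m‖ = 1) (hmg : ⟪m, g⟫ = 0) :
    HasDerivAt (fun τ : ℝ => mirror (m + τ • g) x)
      (-((2 * ⟪m, x⟫) • g + (2 * ⟪g, x⟫) • m)) 0 := by
  have hn : HasDerivAt (fun τ : ℝ => m + τ • g) g 0 := by
    simpa using ((hasDerivAt_id (0 : ℝ)).smul_const g).const_add m
  simp only [mirror_apply]
  refine (((((hn.inner ℝ (hasDerivAt_const (0 : ℝ) x)).fun_div hn.norm_sq
    (by simp [hm])).const_mul 2).fun_smul hn).const_sub x).congr_deriv ?_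
  simp [hm, hmg]

lemma exists_mirror_derivative_eq {m x c η : E} (hm : ‖m‖ = 1) (hcm : ⟪c, m⟫ = 0)
    (hmx : ⟪m, x⟫ ≠ 0) (hcη : ⟪c, η⟫ = 0) (hxη : ⟪mirror m x, η⟫ = 0) :
    ∃ g : E, ⟪m, g⟫ = 0 ∧ ⟪c, g⟫ = 0 ∧ -((2 * ⟪m, x⟫) • g + (2 * ⟪g, x⟫) • m) = η := by
  have hηx : ⟪η, x⟫ = 2 * ⟪m, x⟫ * ⟪m, η⟫ := by
    rw [mirror_apply, inner_sub_left, real_inner_smul_left, hm, real_inner_comm] at hxη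
    linarith
  refine ⟨-(2 * ⟪m, x⟫)⁻¹ • (η - ⟪m, η⟫ • m), ?_, ?_, ?_⟩
  · simp [inner_smul_right, inner_sub_right, hm]
  · simp [inner_smul_right, inner_sub_right, hcη, hcm]
  · rw [real_inner_smul_left, inner_sub_left, real_inner_smul_left, hηx]
    match_scalars <;> field_simp
    ring

lemma exists_forall_inner_eq_of_linearIndependent [FiniteDimensional ℝ E] {ι : Type*} {v : ι → E}
    (hv : LinearIndependent ℝ v) (a : ι → ℝ) : ∃ d : E, ∀ i, ⟪v i, d⟫ = a i := by
  obtain ⟨g, hg⟩ := LinearMap.exists_extend ((Basis.span hv).constr ℝ a)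
  refine ⟨(InnerProductSpace.toDual ℝ E).symm (LinearMap.toContinuousLinearMap g), fun i => ?_⟩
  have hgi := DFunLike.congr_fun hg (Basis.span hv i)
  rw [Basis.constr_basis, LinearMap.comp_apply, Submodule.subtype_apply, Basis.span_apply] at hgi
  rw [real_inner_comm, InnerProductSpace.toDual_symm_apply]
  exact hgi

end Derivatives

namespace Configuration

variable {E : Type*} [NormedAddCommGroup E] [InnerProductSpace ℝ E]

/-- The second point of the flipped configuration. -/
def flipped (p : Configuration E) : E := normalize p.flip.2.1

lemma flipped_eq_mirror (p : Configuration E) :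
    p.flipped = mirror p.normal (normalize p.2.1) := normalize_map _ _

lemma contDiffAt_flipped {k : WithTop ℕ∞} {p : Configuration E} (hp : p ∈ regular E) :
    ContDiffAt ℝ k flipped p :=
  contDiffAt_normalize (contDiffAt_fst.comp p (contDiffAt_snd.comp p (contDiffAt_flip hp)))
    (flip_mem_regular hp).1

lemma inner_flipped_fderiv_flipped {p : Configuration E} (hp : p ∈ regular E)
    (d : Configuration E) : ⟪p.flipped, fderiv ℝ flipped p d⟫ = 0 :=
  inner_hasFDerivAt_eq_zero_of_norm_eq (r := 1)
    ((contDiffAt_flipped (k := 1) hp).differentiableAt one_ne_zero).hasFDerivAt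
    ((isOpen_regular.eventually_mem hp).mono fun _ hq => norm_normalize (flip_mem_regular hq).1) d

lemma inner_center_sub_flipped_fderiv {p : Configuration E} (hp : p ∈ regular E)
    (d : Configuration E) :
    ⟪p.center - p.flipped, fderiv ℝ center p d - fderiv ℝ flipped p d⟫ = 0 := by
  refine inner_hasFDerivAt_eq_zero_of_norm_eq (r := 1)
    (((contDiffAt_center (k := 1) hp).differentiableAt one_ne_zero).hasFDerivAt.sub
      ((contDiffAt_flipped (k := 1) hp).differentiableAt one_ne_zero).hasFDerivAt)
    ((isOpen_regular.eventually_mem hp).mono fun q hq => ?_) d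
  rw [Pi.sub_apply, ← center_flip, center, flipped, add_sub_cancel_left,
    norm_normalize (flip_mem_regular hq).2.1]

/-- Four points of the unit sphere together with a unit normal of the hyperplane, which is to
contain the sum of the two middle points but not these points themselves. -/
structure IsNormalized (p : Configuration E) : Prop where
  norm₁ : ‖p.1‖ = 1
  norm₂ : ‖p.2.1‖ = 1
  norm₃ : ‖p.2.2.1‖ = 1
  norm₄ : ‖p.2.2.2.1‖ = 1
  norm_normal : ‖p.2.2.2.2‖ = 1
  sum_ne_zero : p.2.1 + p.2.2.1 ≠ 0
  inner_sum_normal : ⟪p.2.1 + p.2.2.1, p.2.2.2.2⟫ = 0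
  inner_normal_ne_zero : ⟪p.2.2.2.2, p.2.1⟫ ≠ 0

namespace IsNormalized

variable {p : Configuration E} (hp : p.IsNormalized)

include hp

lemma center_eq : p.center = p.2.1 + p.2.2.1 := by
  rw [center, normalize_eq_self_of_norm_eq_one hp.norm₂, normalize_eq_self_of_norm_eq_one hp.norm₃]

lemma normal_eq : p.normal = p.2.2.2.2 :=
  starProjection_orthogonal_of_inner_eq_zero (by rw [hp.center_eq]; exact hp.inner_sum_normal)

lemma left_eq : p.left = p.1 + p.2.1 := by
  rw [left, normalize_eq_self_of_norm_eq_one hp.norm₁, normalize_eq_self_of_norm_eq_one hp.norm₂]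

lemma right_eq : p.right = p.2.2.1 + p.2.2.2.1 := by
  rw [right, normalize_eq_self_of_norm_eq_one hp.norm₃, normalize_eq_self_of_norm_eq_one hp.norm₄]

lemma mem_regular : p ∈ regular E :=
  ⟨ne_zero_of_norm_ne_zero (by simp [hp.norm₂]), ne_zero_of_norm_ne_zero (by simp [hp.norm₃]),
    by rw [hp.center_eq]; exact hp.sum_ne_zero,
    by rw [hp.normal_eq]; exact ne_zero_of_norm_ne_zero (by simp [hp.norm_normal])⟩

lemma flipped_eq : p.flipped = mirror p.2.2.2.2 p.2.1 := by
  rw [flipped_eq_mirror, hp.normal_eq, normalize_eq_self_of_norm_eq_one hp.norm₂]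

lemma center_sub_flipped : p.center - p.flipped = mirror p.2.2.2.2 p.2.2.1 := by
  rw [hp.flipped_eq, hp.center_eq, sub_eq_iff_eq_add', ← map_add,
    mirror_of_inner_eq_zero (by rw [real_inner_comm]; exact hp.inner_sum_normal)]

lemma fderiv_center_apply {d : Configuration E} (h₂ : ⟪p.2.1, d.2.1⟫ = 0)
    (h₃ : ⟪p.2.2.1, d.2.2.1⟫ = 0) : fderiv ℝ center p d = d.2.1 + d.2.2.1 := by
  have hcenter := ((hasFDerivAt_normalize hp.norm₂).comp p
    (f := fun q : Configuration E => q.2.1) hasFDerivAt_snd.fst).add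
    ((hasFDerivAt_normalize hp.norm₃).comp p (f := fun q : Configuration E => q.2.2.1)
      hasFDerivAt_snd.snd.fst)
  exact (DFunLike.congr_fun hcenter.fderiv d).trans (congrArg₂ _
    (starProjection_orthogonal_of_inner_eq_zero h₂) (starProjection_orthogonal_of_inner_eq_zero h₃))

lemma fderiv_sums_apply {d : Configuration E} (h₁ : ⟪p.1, d.1⟫ = 0) (h₂ : ⟪p.2.1, d.2.1⟫ = 0)
    (h₃ : ⟪p.2.2.1, d.2.2.1⟫ = 0) (h₄ : ⟪p.2.2.2.1, d.2.2.2.1⟫ = 0) :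
    fderiv ℝ sums p d =
      (d.1 + d.2.1 + (d.2.2.1 + d.2.2.2.1), d.1 + d.2.1, d.1 + fderiv ℝ flipped p d) := by
  have hx₁ := (hasFDerivAt_normalize hp.norm₁).comp p (f := fun q : Configuration E => q.1)
    hasFDerivAt_fst
  have hx₂ := (hasFDerivAt_normalize hp.norm₂).comp p (f := fun q : Configuration E => q.2.1)
    hasFDerivAt_snd.fst
  have hx₃ := (hasFDerivAt_normalize hp.norm₃).comp p (f := fun q : Configuration E => q.2.2.1)
    hasFDerivAt_snd.snd.fst
  have hx₄ := (hasFDerivAt_normalize hp.norm₄).comp p (f := fun q : Configuration E => q.2.2.2.1)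
    hasFDerivAt_snd.snd.snd.fst
  have hY := ((contDiffAt_flipped (k := 1) hp.mem_regular).differentiableAt one_ne_zero).hasFDerivAt
  have hsums : HasFDerivAt sums _ p :=
    ((hx₁.add hx₂).add (hx₃.add hx₄)).prodMk ((hx₁.add hx₂).prodMk (hx₁.add hY))
  have e₁ := starProjection_orthogonal_of_inner_eq_zero h₁
  have e₂ := starProjection_orthogonal_of_inner_eq_zero h₂
  have e₃ := starProjection_orthogonal_of_inner_eq_zero h₃
  have e₄ := starProjection_orthogonal_of_inner_eq_zero h₄
  rw [hsums.fderiv]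
  simp [e₁, e₂, e₃, e₄]

lemma fderiv_flipped_normal {g : E} (hcg : ⟪p.2.1 + p.2.2.1, g⟫ = 0) (hmg : ⟪p.2.2.2.2, g⟫ = 0) :
    fderiv ℝ flipped p (0, 0, 0, 0, g) =
      -((2 * ⟪p.2.2.2.2, p.2.1⟫) • g + (2 * ⟪g, p.2.1⟫) • p.2.2.2.2) := by
  have hY := ((contDiffAt_flipped (k := 1) hp.mem_regular).differentiableAt one_ne_zero).hasFDerivAt
  have hcurve : HasDerivAt
      (fun τ : ℝ => (p.1, p.2.1, p.2.2.1, p.2.2.2.1, p.2.2.2.2 + τ • g))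
      ((0, 0, 0, 0, g) : Configuration E) 0 := by
    have hlin : HasDerivAt (fun τ : ℝ => p.2.2.2.2 + τ • g) g 0 := by
      simpa using ((hasDerivAt_id (0 : ℝ)).smul_const g).const_add p.2.2.2.2
    exact (hasDerivAt_const _ _).prodMk ((hasDerivAt_const _ _).prodMk
      ((hasDerivAt_const _ _).prodMk ((hasDerivAt_const _ _).prodMk hlin)))
  refine (HasFDerivAt.comp_hasDerivAt_of_eq (0 : ℝ) hY hcurve (by simp)).unique
    ((hasDerivAt_mirror hp.norm_normal hmg).congr_of_eventuallyEq
      (Eventually.of_forall fun τ => ?_))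
  have hnormal :
      normal (p.1, p.2.1, p.2.2.1, p.2.2.2.1, p.2.2.2.2 + τ • g) = p.2.2.2.2 + τ • g := by
    refine starProjection_orthogonal_of_inner_eq_zero (Eq.trans (b := ⟪p.center, _⟫) rfl ?_)
    rw [hp.center_eq, inner_add_right, inner_smul_right, hp.inner_sum_normal, hcg, mul_zero,
      add_zero]
  simp only [Function.comp_apply, flipped_eq_mirror, hnormal,
    normalize_eq_self_of_norm_eq_one hp.norm₂]

lemma exists_fderiv_flipped_eq {d₁ d₂ d₃ d₄ δ : E} (h₂ : ⟪p.2.1, d₂⟫ = 0) (h₃ : ⟪p.2.2.1, d₃⟫ = 0)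
    (hδ₂ : ⟪mirror p.2.2.2.2 p.2.1, δ⟫ = 0) (hδ₃ : ⟪mirror p.2.2.2.2 p.2.2.1, d₂ + d₃ - δ⟫ = 0) :
    ∃ g, fderiv ℝ flipped p (d₁, d₂, d₃, d₄, g) = δ := by
  let D : Configuration E := (d₁, d₂, d₃, d₄, 0)
  set η := δ - fderiv ℝ flipped p D
  have hη₂ : ⟪mirror p.2.2.2.2 p.2.1, η⟫ = 0 := by
    have h := inner_flipped_fderiv_flipped hp.mem_regular D
    rw [hp.flipped_eq] at h
    rw [inner_sub_right, hδ₂, h, sub_zero]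
  have hη₃ : ⟪mirror p.2.2.2.2 p.2.2.1, η⟫ = 0 := by
    have h := inner_center_sub_flipped_fderiv hp.mem_regular D
    rw [hp.center_sub_flipped, hp.fderiv_center_apply h₂ h₃] at h
    rw [show η = (d₂ + d₃ - fderiv ℝ flipped p D) - (d₂ + d₃ - δ) by simp only [η]; abel,
      inner_sub_right, hδ₃, sub_zero]
    exact h
  have hcη : ⟪p.2.1 + p.2.2.1, η⟫ = 0 := by
    rw [← hp.center_eq, ← add_sub_cancel p.flipped p.center, hp.center_sub_flipped, hp.flipped_eq,
      inner_add_left, hη₂, hη₃, add_zero]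
  obtain ⟨g, hmg, hcg, hg⟩ := exists_mirror_derivative_eq hp.norm_normal hp.inner_sum_normal
    hp.inner_normal_ne_zero hcη hη₂
  refine ⟨g, ?_⟩
  rw [show ((d₁, d₂, d₃, d₄, g) : Configuration E) = D + (0, 0, 0, 0, g) by simp [D], map_add,
    hp.fderiv_flipped_normal hcg hmg, hg, add_sub_cancel]

lemma surjective_fderiv_sums [FiniteDimensional ℝ E]
    (h₁ : LinearIndependent ℝ ![p.1, p.2.1, mirror p.2.2.2.2 p.2.1])
    (h₄ : LinearIndependent ℝ ![p.2.2.2.1, p.2.2.1, mirror p.2.2.2.2 p.2.2.1]) :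
    Function.Surjective (fderiv ℝ sums p) := by
  rintro ⟨s, z, w⟩
  obtain ⟨d₁, hd₁⟩ := exists_forall_inner_eq_of_linearIndependent h₁
    ![0, ⟪p.2.1, z⟫, ⟪mirror p.2.2.2.2 p.2.1, w⟫]
  obtain ⟨d₄, hd₄⟩ := exists_forall_inner_eq_of_linearIndependent h₄
    ![0, ⟪p.2.2.1, s - z⟫, ⟪mirror p.2.2.2.2 p.2.2.1, s - w⟫]
  have h₂ : ⟪p.2.1, z - d₁⟫ = 0 := by rw [inner_sub_right, sub_eq_zero]; exact (hd₁ 1).symm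
  have h₃ : ⟪p.2.2.1, s - z - d₄⟫ = 0 := by rw [inner_sub_right, sub_eq_zero]; exact (hd₄ 1).symm
  obtain ⟨g, hg⟩ := hp.exists_fderiv_flipped_eq (d₁ := d₁) (d₄ := d₄) (δ := w - d₁) h₂ h₃
    (by rw [inner_sub_right, sub_eq_zero]; exact (hd₁ 2).symm)
    (by rw [show z - d₁ + (s - z - d₄) - (w - d₁) = s - w - d₄ by abel, inner_sub_right,
          sub_eq_zero]
        exact (hd₄ 2).symm)
  refine ⟨(d₁, z - d₁, s - z - d₄, d₄, g), ?_⟩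
  rw [hp.fderiv_sums_apply (d := (d₁, z - d₁, s - z - d₄, d₄, g)) (hd₁ 0) h₂ h₃
    (hd₄ 0), hg]
  simp

end IsNormalized

end Configuration

section SphereDecomposition

variable {E : Type*} [NormedAddCommGroup E] [InnerProductSpace ℝ E]

lemma exists_norm_eq_one_inner_eq_zero [FiniteDimensional ℝ E] (hE : 2 < finrank ℝ E) (a b : E) :
    ∃ m : E, ‖m‖ = 1 ∧ ⟪a, m⟫ = 0 ∧ ⟪b, m⟫ = 0 := by
  have hspan : Submodule.span ℝ {a, b} ≠ ⊤ := fun h => by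
    classical
    have hcard := finrank_span_finset_le_card (R := ℝ) ({a, b} : Finset E)
    rw [Finset.coe_pair, Set.finrank, h, finrank_top] at hcard
    exact hE.not_ge (hcard.trans Finset.card_le_two)
  obtain ⟨x, hx, hx0⟩ :=
    (Submodule.ne_bot_iff _).1 (mt Submodule.orthogonal_eq_bot_iff.1 hspan)
  refine ⟨normalize x, norm_normalize hx0, ?_, ?_⟩ <;>
    rw [NormedSpace.normalize, inner_smul_right, hx _ (Submodule.subset_span (by simp)), mul_zero]

variable {z k m : E}

lemma norm_add_smul_add_smul_sq (hk : ‖k‖ = 1) (hm : ‖m‖ = 1) (hzk : ⟪z, k⟫ = 0)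
    (hzm : ⟪z, m⟫ = 0) (hkm : ⟪k, m⟫ = 0) (r t : ℝ) :
    ‖z + r • k + t • m‖ ^ 2 = ‖z‖ ^ 2 + r ^ 2 + t ^ 2 := by
  rw [norm_add_sq_real, norm_add_sq_real, inner_add_left]
  simp only [inner_smul_right, real_inner_smul_left, hzk, hzm, hkm, norm_smul, hk, hm,
    Real.norm_eq_abs, mul_one, sq_abs]
  ring

lemma linearIndependent_sphere_decomposition (hz : z ≠ 0) (hk : ‖k‖ = 1) (hm : ‖m‖ = 1)
    (hzk : ⟪z, k⟫ = 0) (hzm : ⟪z, m⟫ = 0) (hkm : ⟪k, m⟫ = 0) {r t : ℝ} (hr : r ≠ 0) (ht : t ≠ 0) :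
    LinearIndependent ℝ ![z - r • k - t • m, z + r • k + t • m, z + r • k - t • m] := by
  have hzz : ⟪z, z⟫ ≠ 0 := inner_self_ne_zero.2 hz
  rw [Fintype.linearIndependent_iff]
  intro c hc
  simp only [Fin.sum_univ_three, Matrix.cons_val] at hc
  have hcz := congrArg (inner ℝ z) hc
  have hck := congrArg (inner ℝ k) hc
  have hcm := congrArg (inner ℝ m) hc
  simp only [inner_add_right, inner_sub_right, inner_smul_right, hzk, hzm, hkm,
    real_inner_comm z k, real_inner_comm z m, real_inner_comm k m, real_inner_self_eq_norm_sq k,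
    real_inner_self_eq_norm_sq m, hk, hm, inner_zero_right] at hcz hck hcm
  have hz₀ : c 0 + c 1 + c 2 = 0 := mul_right_cancel₀ hzz (by linarith)
  have hk₀ : -c 0 + c 1 + c 2 = 0 := mul_right_cancel₀ hr (by linarith)
  have hm₀ : -c 0 + c 1 - c 2 = 0 := mul_right_cancel₀ ht (by linarith)
  intro i
  fin_cases i <;> simp only [Fin.zero_eta, Fin.mk_one, Fin.reduceFinMk] <;> linarith

lemma mirror_add_smul_add_smul (hm : ‖m‖ = 1) (hzm : ⟪z, m⟫ = 0) (hkm : ⟪k, m⟫ = 0) (r t : ℝ) :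
    mirror m (z + r • k + t • m) = z + r • k - t • m := by
  rw [mirror_apply]
  simp only [inner_add_right, inner_smul_right, real_inner_comm z m, hzm, real_inner_comm k m, hkm,
    real_inner_self_eq_norm_sq, hm]
  module

lemma exists_sq_eq_and_smul_ne {a : ℝ} (ha : 0 < a) (hk : k ≠ 0) (c : E) :
    ∃ r : ℝ, r ^ 2 = a ∧ r • k ≠ c := by
  by_cases hc : √a • k = c
  · refine ⟨-√a, by rw [neg_sq, Real.sq_sqrt ha.le], fun hc' => ?_⟩
    have hdouble : (2 * √a) • k = 0 := by linear_combination (norm := module) hc - hc'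
    exact smul_ne_zero (by positivity) hk hdouble
  · exact ⟨√a, Real.sq_sqrt ha.le, hc⟩

lemma exists_sphere_decomposition [FiniteDimensional ℝ E] (hE : 2 < finrank ℝ E) (hz : z ≠ 0)
    (hm : ‖m‖ = 1) (hzm : ⟪z, m⟫ = 0) {t : ℝ} (ht : t ≠ 0) (hzt : ‖z‖ ^ 2 / 4 + t ^ 2 < 1)
    (c : E) : ∃ x₁ x₂ : E, ‖x₁‖ = 1 ∧ ‖x₂‖ = 1 ∧ x₁ + x₂ = z ∧ ⟪m, x₂⟫ = t ∧ x₂ ≠ c ∧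
      LinearIndependent ℝ ![x₁, x₂, mirror m x₂] := by
  obtain ⟨k, hk, hzk, hmk⟩ := exists_norm_eq_one_inner_eq_zero hE z m
  obtain ⟨y, rfl⟩ : ∃ y : E, (2 : ℝ) • y = z := ⟨(2 : ℝ)⁻¹ • z, smul_inv_smul₀ two_ne_zero z⟩
  rw [norm_smul, Real.norm_of_nonneg zero_le_two] at hzt
  rw [smul_ne_zero_iff] at hz
  replace hzm : ⟪y, m⟫ = 0 := by simpa [real_inner_smul_left] using hzm
  replace hzk : ⟪y, k⟫ = 0 := by simpa [real_inner_smul_left] using hzk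
  have hkm : ⟪k, m⟫ = 0 := by rw [real_inner_comm, hmk]
  have hpos : 0 < 1 - ‖y‖ ^ 2 - t ^ 2 := by linarith
  obtain ⟨r, hr, hrc⟩ := exists_sq_eq_and_smul_ne hpos
    (ne_zero_of_norm_ne_zero (hk.trans_ne one_ne_zero)) (c - y - t • m)
  have hnorm : ∀ r' t' : ℝ, r' ^ 2 = r ^ 2 → t' ^ 2 = t ^ 2 → ‖y + r' • k + t' • m‖ = 1 := by
    intro r' t' hr' ht'
    rw [← sq_eq_sq₀ (norm_nonneg _) zero_le_one, norm_add_smul_add_smul_sq hk hm hzk hzm hkm, hr',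
      ht', hr]
    ring
  refine ⟨y - r • k - t • m, y + r • k + t • m, ?_, hnorm r t rfl rfl, by module, ?_, ?_, ?_⟩
  · simpa only [neg_smul, ← sub_eq_add_neg] using hnorm (-r) (-t) (neg_sq r) (neg_sq t)
  · simp [inner_add_right, inner_smul_right, hmk, hm, real_inner_comm y m, hzm]
  · exact fun hc => hrc (by rw [← hc]; abel)
  · rw [mirror_add_smul_add_smul hm hzm hkm]
    exact linearIndependent_sphere_decomposition hz.2 hk hm hzk hzm hkm
      (pow_ne_zero_iff two_ne_zero |>.1 (hr ▸ hpos.ne')) ht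

end SphereDecomposition

namespace Configuration

variable {E : Type*} [NormedAddCommGroup E] [InnerProductSpace ℝ E] [FiniteDimensional ℝ E]

lemma exists_isNormalized_of_mem_lens (hE : 2 < finrank ℝ E) {s z : E} (hz : z ∈ lens s) :
    ∃ p : Configuration E, p.IsNormalized ∧ p.left = z ∧ p.left + p.right = s ∧
      Function.Surjective (fderiv ℝ sums p) := by
  obtain ⟨⟨hz₂, hsz₂⟩, hz₀⟩ := hz
  simp only [Set.mem_insert_iff, Set.mem_singleton_iff, not_or] at hz₀
  rw [mem_ball_zero_iff] at hz₂
  rw [mem_ball, dist_eq_norm_sub'] at hsz₂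
  obtain ⟨m, hm, hzm, hszm⟩ := exists_norm_eq_one_inner_eq_zero hE z (s - z)
  have hpos : ∀ y : E, ‖y‖ < 2 → 0 < 1 - ‖y‖ ^ 2 / 4 := fun y hy => by nlinarith [norm_nonneg y]
  obtain ⟨T, hT₀, hT⟩ := exists_between (lt_min (hpos z hz₂) (hpos (s - z) hsz₂))
  obtain ⟨hT₁, hT₂⟩ := lt_min_iff.1 hT
  have ht : √T ≠ 0 := (Real.sqrt_pos.2 hT₀).ne'
  have ht₂ : √T ^ 2 = T := Real.sq_sqrt hT₀.le
  obtain ⟨x₁, x₂, h₁, h₂, hz, hmx₂, -, hind₁⟩ :=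
    exists_sphere_decomposition hE hz₀.1 hm hzm ht (by linarith) 0
  obtain ⟨x₄, x₃, h₄, h₃, hsz, hmx₃, hne, hind₄⟩ :=
    exists_sphere_decomposition hE (sub_ne_zero.2 (Ne.symm hz₀.2)) hm hszm (neg_ne_zero.2 ht)
      (by linarith [neg_sq (√T)]) (-x₂)
  have hp : IsNormalized (x₁, x₂, x₃, x₄, m) :=
    ⟨h₁, h₂, h₃, h₄, hm, fun h => hne (eq_neg_of_add_eq_zero_right h),
      by rw [real_inner_comm, inner_add_right, hmx₂, hmx₃, add_neg_cancel], by rwa [hmx₂]⟩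
  refine ⟨_, hp, by rw [hp.left_eq, hz], ?_, hp.surjective_fderiv_sums hind₁ hind₄⟩
  rw [hp.left_eq, hp.right_eq, hz, add_comm x₃, hsz, add_sub_cancel]

variable [MeasurableSpace E] [BorelSpace E] [Nontrivial E]

lemma exists_agreesNear_of_mem_lens {A : Type*} [Semigroup A] {U V : E → A}
    (hUV : ∀ᵐ q ∂(surfaceMeasure E).prod (surfaceMeasure E), U q.1 * U q.2 = V (q.1 + q.2))
    (hE : 2 < finrank ℝ E) {s z : E} (hz : z ∈ lens s) :
    ∃ w, AgreesNear (fun s z => V z * V (s - z)) s z w := by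
  obtain ⟨p, hp, rfl, rfl, hsurj⟩ := exists_isNormalized_of_mem_lens hE hz
  have hp₁ : p.1 ≠ 0 := ne_zero_of_norm_ne_zero (by simp [hp.norm₁])
  have hp₄ : p.2.2.2.1 ≠ 0 := ne_zero_of_norm_ne_zero (by simp [hp.norm₄])
  have hsums : ContDiffAt ℝ 1 sums p := contDiffAt_sums hp.mem_regular hp₁ hp₄
  refine ⟨p.flip.left, nhds_inf_ae_le_map_of_surjective volume volume
    (hsums.hasStrictFDerivAt one_ne_zero)
    ((hsums.eventually (by simp)).mono fun q hq => hq.differentiableAt one_ne_zero) hsurj ?_⟩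
  rw [mem_map]
  filter_upwards [mem_inf_of_left (isOpen_regular.mem_nhds hp.mem_regular),
    mem_inf_of_right (ae_mul_eq_mul hUV)] with q hq hmul using hmul hq

end Configuration

lemma ae_mul_sub_eq_of_mem_lens {E : Type*} [NormedAddCommGroup E] [InnerProductSpace ℝ E]
    [FiniteDimensional ℝ E] [MeasurableSpace E] [BorelSpace E] {A : Type*} [Semigroup A]
    {U V : E → A}
    (hUV : ∀ᵐ q ∂(surfaceMeasure E).prod (surfaceMeasure E), U q.1 * U q.2 = V (q.1 + q.2))
    (hE : 2 < finrank ℝ E) :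
    ∀ᵐ q : E × E × E, q.2.1 ∈ lens q.1 ∧ q.2.2 ∈ lens q.1 →
      V q.2.1 * V (q.1 - q.2.1) = V q.2.2 * V (q.1 - q.2.2) :=
  have : Nontrivial E := nontrivial_of_finrank_pos (R := ℝ) (by lia)
  ae_eq_of_forall_mem_lens (by lia) fun _ _ =>
    Configuration.exists_agreesNear_of_mem_lens hUV hE

section AsymptoticClasses

/-- The families of elements of a topological group tending to `1` along a filter. In the quotient
by this subgroup, asymptotic equations between families become exact equations. -/
def tendstoOneSubgroup {ι : Type*} (l : Filter ι) (A : Type*) [CommGroup A] [TopologicalSpace A]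
    [IsTopologicalGroup A] : Subgroup (ι → A) where
  carrier := {u | Tendsto u l (𝓝 1)}
  one_mem' := tendsto_const_nhds
  mul_mem' hu hv := mul_one (1 : A) ▸ Tendsto.mul hu hv
  inv_mem' hu := inv_one (G := A) ▸ Tendsto.inv hu

lemma ae_tendsto_div_of_mem_lens {E : Type*} [NormedAddCommGroup E] [InnerProductSpace ℝ E]
    [FiniteDimensional ℝ E] [MeasurableSpace E] [BorelSpace E] {A : Type*} [CommGroup A]
    [TopologicalSpace A] [IsTopologicalGroup A] {ι : Type*} {l : Filter ι} {u v : ι → E → A}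
    (huv : ∀ᵐ q ∂(surfaceMeasure E).prod (surfaceMeasure E),
      Tendsto (fun i => u i q.1 * u i q.2 / v i (q.1 + q.2)) l (𝓝 1)) (hE : 2 < finrank ℝ E) :
    ∀ᵐ q : E × E × E, q.2.1 ∈ lens q.1 ∧ q.2.2 ∈ lens q.1 →
      Tendsto (fun i => v i q.2.1 * v i (q.1 - q.2.1) / (v i q.2.2 * v i (q.1 - q.2.2)))
        l (𝓝 1) := by
  let U (x : E) : (ι → A) ⧸ tendstoOneSubgroup l A := QuotientGroup.mk fun i => u i x
  let V (x : E) : (ι → A) ⧸ tendstoOneSubgroup l A := QuotientGroup.mk fun i => v i x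
  have hUV : ∀ᵐ q ∂(surfaceMeasure E).prod (surfaceMeasure E), U q.1 * U q.2 = V (q.1 + q.2) :=
    huv.mono fun q hq => QuotientGroup.eq_iff_div_mem.2 hq
  exact (ae_mul_sub_eq_of_mem_lens hUV hE).mono
    fun q hq hlens => QuotientGroup.eq_iff_div_mem.1 (hq hlens)

end AsymptoticClasses

section Average

lemma tendsto_integral_of_tendsto_sub {Ω F : Type*} [MeasurableSpace Ω] {P : Measure Ω}
    [IsProbabilityMeasure P] [NormedAddCommGroup F] [NormedSpace ℝ F] [CompleteSpace F]
    {g : ℕ → Ω → F} {c : ℕ → F} {C : ℝ} (hg : ∀ n, AEStronglyMeasurable (g n) P)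
    (hgC : ∀ n ω, ‖g n ω‖ ≤ C) (hcC : ∀ n, ‖c n‖ ≤ C)
    (h : ∀ᵐ ω ∂P, Tendsto (fun n => c n - g n ω) atTop (𝓝 0)) :
    Tendsto (fun n => c n - ∫ ω, g n ω ∂P) atTop (𝓝 0) := by
  have hint : ∀ n, ∫ ω, (c n - g n ω) ∂P = c n - ∫ ω, g n ω ∂P := fun n => by
    rw [integral_sub (integrable_const _) (.of_bound (hg n) C (ae_of_all _ (hgC n))),
      integral_const, probReal_univ, one_smul]
  have hlim := tendsto_integral_of_dominated_convergence (fun _ => C + C)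
    (fun n => aestronglyMeasurable_const.sub (hg n)) (integrable_const _)
    (fun n => ae_of_all P fun ω => norm_sub_le_of_le (hcC n) (hgC n ω)) h
  simpa only [Pi.sub_apply, hint, integral_zero] using hlim

lemma stronglyMeasurable_setAverage_prodMk {X Y F : Type*} [MeasurableSpace X] [MeasurableSpace Y]
    {ν : Measure Y} [SFinite ν] [NormedAddCommGroup F] [NormedSpace ℝ F] {T : Set (X × Y)}
    (hT : MeasurableSet T) {f : X × Y → F} (hf : StronglyMeasurable f) :
    StronglyMeasurable fun x => ⨍ y in Prod.mk x ⁻¹' T, f (x, y) ∂ν := by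
  have hint : ∀ x, ∫ y in Prod.mk x ⁻¹' T, f (x, y) ∂ν = ∫ y, T.indicator f (x, y) ∂ν :=
    fun x => (integral_indicator (measurable_prodMk_left hT)).symm
  simp only [setAverage_eq, hint]
  exact (measurable_measure_prodMk_left hT).ennreal_toReal.inv.stronglyMeasurable.smul
    (hf.indicator hT).integral_prod_right'

variable {E : Type*} [NormedAddCommGroup E]

lemma isOpen_setOf_mem_lens : IsOpen {q : E × E | q.2 ∈ lens q.1} := by
  have hset : {q : E × E | q.2 ∈ lens q.1} =
      {q | dist q.2 0 < 2} ∩ {q | dist q.2 q.1 < 2} ∩ ({q | q.2 ≠ 0} ∩ {q | q.2 ≠ q.1}) := by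
    ext q
    simp only [lens, Set.mem_ofPred_eq, Set.mem_sdiff, Set.mem_inter_iff, mem_ball,
      Set.mem_insert_iff, Set.mem_singleton_iff, not_or, ne_eq]
  rw [hset]
  exact ((isOpen_lt (by fun_prop) (by fun_prop)).inter
    (isOpen_lt (by fun_prop) (by fun_prop))).inter
    ((isOpen_ne_fun (by fun_prop) (by fun_prop)).inter (isOpen_ne_fun (by fun_prop) (by fun_prop)))

lemma mem_lens_add {z z' : E} : z ∈ lens (z + z') ↔ ‖z‖ < 2 ∧ ‖z'‖ < 2 ∧ z ≠ 0 ∧ z' ≠ 0 := by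
  simp only [lens, Set.mem_sdiff, Set.mem_inter_iff, mem_ball, dist_zero_right, dist_self_add_right,
    Set.mem_insert_iff, Set.mem_singleton_iff, left_eq_add, not_or, ne_eq, and_assoc]

/-- The average of the products `v w * v (s - w)` over the decompositions of `s` in `lens s`. -/
def lensAverage [MeasureSpace E] (v : E → ℂ) (s : E) : ℂ :=
  ⨍ w in lens s, v w * v (s - w)

variable [NormedSpace ℝ E] [FiniteDimensional ℝ E] [MeasureSpace E] [BorelSpace E]
  [(volume : Measure E).IsAddHaarMeasure]

lemma measurable_lensAverage {v : E → ℂ} (hv : Measurable v) : Measurable (lensAverage v) :=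
  (stronglyMeasurable_setAverage_prodMk (ν := volume) isOpen_setOf_mem_lens.measurableSet
    (f := fun q => v q.2 * v (q.1 - q.2)) ((hv.comp measurable_snd).mul
      (hv.comp (measurable_fst.sub measurable_snd))).stronglyMeasurable).measurable

lemma tendsto_mul_sub_lensAverage {v : ℕ → E → ℂ} (hv : ∀ n, Measurable (v n))
    (hv1 : ∀ n x, ‖v n x‖ ≤ 1) {z s : E} (hz : z ∈ lens s)
    (h : ∀ᵐ w, w ∈ lens s →
      Tendsto (fun n => v n z * v n (s - z) - v n w * v n (s - w)) atTop (𝓝 0)) :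
    Tendsto (fun n => v n z * v n (s - z) - lensAverage (v n) s) atTop (𝓝 0) := by
  have hpos : NeZero (volume.restrict (lens s)) :=
    ⟨Measure.restrict_eq_zero.not.2 ((isOpen_lens s).measure_pos _ ⟨z, hz⟩).ne'⟩
  have hfin : IsFiniteMeasure (volume.restrict (lens s)) :=
    isFiniteMeasure_restrict.2 ((measure_mono fun w hw => hw.1.1).trans_lt measure_ball_lt_top).ne
  have hbound : ∀ n x y, ‖v n x * v n y‖ ≤ 1 := fun n x y =>
    (norm_mul_le _ _).trans (mul_le_one₀ (hv1 n x) (norm_nonneg _) (hv1 n y))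
  exact tendsto_integral_of_tendsto_sub
    (fun n => ((hv n).mul ((hv n).comp (measurable_const.sub measurable_id))).aestronglyMeasurable)
    (fun n w => hbound n w (s - w)) (fun n => hbound n z (s - z))
    (Measure.ae_smul_measure ((ae_restrict_iff' (isOpen_lens s).measurableSet).2 h) _)

end Average

section Convergence

variable {X F : Type*} [MeasurableSpace X] {μ : Measure X} [NormedAddCommGroup F]

lemma ae_tendsto_zero_of_summable {f : ℕ → X → F} {s : ℕ → Set X} {δ : ℕ → ℝ} (hδ : Summable δ)
    (hδ0 : ∀ n, 0 ≤ δ n) (hs : ∀ n, μ (s n) ≤ ENNReal.ofReal (δ n))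
    (hf : ∀ n, ∀ᵐ x ∂μ, x ∉ s n → ‖f n x‖ ≤ δ n) :
    ∀ᵐ x ∂μ, Tendsto (fun n => f n x) atTop (𝓝 0) := by
  have hsum : ∑' n, μ (s n) ≠ ∞ := by
    refine ne_top_of_le_ne_top ?_ (ENNReal.tsum_le_tsum hs)
    rw [← ENNReal.ofReal_tsum_of_nonneg hδ0 hδ]
    exact ENNReal.ofReal_ne_top
  filter_upwards [ae_eventually_notMem hsum, ae_all_iff.2 hf] with x hx hfx
  exact squeeze_zero_norm' (hx.mono hfx) hδ.tendsto_atTop_zero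

lemma eventually_exists_measure_lt_forall_norm_lt {s : Set X} (hs : MeasurableSet s)
    (hμs : μ s ≠ ∞) {f : ℕ → X → F} (hf : ∀ n, StronglyMeasurable (f n))
    (h : ∀ᵐ x ∂μ, x ∈ s → Tendsto (fun n => f n x) atTop (𝓝 0)) {ε : ℝ} (hε : 0 < ε)
    {η : ℝ≥0∞} (hη : 0 < η) : ∀ᶠ n in atTop, ∃ t, MeasurableSet t ∧ t ⊆ s ∧ μ t < η ∧
      ∀ x ∈ s \ t, ‖f n x‖ < ε := by
  have hfin : IsFiniteMeasure (μ.restrict s) := isFiniteMeasure_restrict.2 hμs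
  have hlim := tendstoInMeasure_of_tendsto_ae (fun n => (hf n).aestronglyMeasurable)
    ((ae_restrict_iff' hs).2 h)
  refine ((tendstoInMeasure_iff_norm.1 hlim ε hε).eventually_lt_const hη).mono fun n hn => ?_
  simp only [sub_zero] at hn
  refine ⟨s ∩ {x | ε ≤ ‖f n x‖},
    hs.inter (measurableSet_le measurable_const (hf n).norm.measurable), Set.inter_subset_left,
    ?_, fun x hx => not_le.1 fun hxε => hx.2 ⟨hx.1, hxε⟩⟩
  rwa [Set.inter_comm, ← Measure.restrict_apply' hs]

lemma tendsto_circle_div_nhds_one_iff {ι : Type*} {l : Filter ι} {a b : ι → Circle} :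
    Tendsto (fun i => a i / b i) l (𝓝 1) ↔ Tendsto (fun i => (a i : ℂ) - b i) l (𝓝 0) := by
  have hnorm : ∀ i, dist (a i / b i) 1 = ‖(a i : ℂ) - b i‖ := fun i => by
    calc dist (a i / b i) 1 = ‖(a i : ℂ) / b i - 1‖ := by
          rw [← Circle.coe_div, ← Circle.coe_one]
          exact dist_eq_norm ((a i / b i : Circle) : ℂ) (1 : Circle)
      _ = ‖(a i : ℂ) - b i‖ := by
          rw [div_sub_one (b i).coe_ne_zero, norm_div, Circle.norm_coe, div_one]
  rw [tendsto_iff_dist_tendsto_zero, tendsto_congr hnorm]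
  exact tendsto_zero_iff_norm_tendsto_zero.symm

end Convergence

section Transfer

variable {E : Type*} [NormedAddCommGroup E] [InnerProductSpace ℝ E]
  [MeasurableSpace E] [BorelSpace E]

lemma ae_mem_sphere_prod : ∀ᵐ q ∂(surfaceMeasure E).prod (surfaceMeasure E),
    q ∈ sphere (0 : E) 1 ×ˢ sphere (0 : E) 1 := by
  have hmem : ∀ᵐ x ∂surfaceMeasure E, x ∈ sphere (0 : E) 1 :=
    ae_restrict_mem isClosed_sphere.measurableSet
  exact (Measure.quasiMeasurePreserving_fst.ae hmem).and
    (Measure.quasiMeasurePreserving_snd.ae hmem)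

lemma ae_tendsto_circle_exp_sub {G : ℕ → Set (E × E)} {φ ψ : ℕ → E → ℝ} {δ : ℕ → ℝ}
    (hδ : Summable δ) (hδ0 : ∀ n, 0 ≤ δ n)
    (hG : ∀ n, ((surfaceMeasure E).prod (surfaceMeasure E))
      ((sphere 0 1 ×ˢ sphere 0 1) \ G n) ≤ ENNReal.ofReal (δ n))
    (hφψ : ∀ n, ∀ p ∈ G n, ‖Complex.exp (Complex.I * ((φ n p.1 + φ n p.2 : ℝ) : ℂ))
      - Complex.exp (Complex.I * ((ψ n (p.1 + p.2) : ℝ) : ℂ))‖ ≤ δ n) :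
    ∀ᵐ q ∂(surfaceMeasure E).prod (surfaceMeasure E),
      Tendsto (fun n => Complex.exp (Complex.I * ((φ n q.1 + φ n q.2 : ℝ) : ℂ))
        - Complex.exp (Complex.I * ((ψ n (q.1 + q.2) : ℝ) : ℂ))) atTop (𝓝 0) :=
  ae_tendsto_zero_of_summable hδ hδ0 hG fun n => ae_mem_sphere_prod.mono
    fun q hq hqG => hφψ n q (by_contra fun hqG' => hqG ⟨hq, hqG'⟩)

variable [FiniteDimensional ℝ E]

lemma ae_tendsto_mul_sub_lensAverage {u v : ℕ → E → Circle}
    (hv : ∀ n, Measurable fun x => (v n x : ℂ))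
    (huv : ∀ᵐ q ∂(surfaceMeasure E).prod (surfaceMeasure E),
      Tendsto (fun n => (u n q.1 * u n q.2 : ℂ) - v n (q.1 + q.2)) atTop (𝓝 0))
    (hE : 2 < finrank ℝ E) :
    ∀ᵐ p : E × E, p ∈ ball (0 : E) 2 ×ˢ ball (0 : E) 2 →
      Tendsto (fun n => (v n p.1 * v n p.2 : ℂ) - lensAverage (fun x => v n x) (p.1 + p.2))
        atTop (𝓝 0) := by
  have : Nontrivial E := nontrivial_of_finrank_pos (zero_lt_two.trans hE)
  have hlens := ae_tendsto_div_of_mem_lens (l := atTop) (u := u) (v := v)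
    (huv.mono fun q hq => tendsto_circle_div_nhds_one_iff.2 (by exact_mod_cast hq)) hE
  have hsum := quasiMeasurePreserving_of_isLinearMap (volume : Measure ((E × E) × E)) volume
    (f := fun q : (E × E) × E => (q.1.1 + q.1.2, q.1.1, q.2)) (LinearMap.isLinear <|
      ((LinearMap.fst ℝ E E + LinearMap.snd ℝ E E) ∘ₗ LinearMap.fst ℝ (E × E) E).prod
        ((LinearMap.fst ℝ E E ∘ₗ LinearMap.fst ℝ (E × E) E).prod (LinearMap.snd ℝ (E × E) E)))
    fun q => ⟨((q.2.1, q.1 - q.2.1), q.2.2), by simp only [add_sub_cancel]⟩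
  have hne : ∀ᵐ x : E, x ≠ 0 := Measure.ae_ne volume 0
  filter_upwards [Measure.ae_ae_of_ae_prod (hsum.ae hlens),
    Measure.quasiMeasurePreserving_fst.ae hne, Measure.quasiMeasurePreserving_snd.ae hne]
    with p hp hp₁ hp₂ hpB
  have hmem : p.1 ∈ lens (p.1 + p.2) :=
    mem_lens_add.2 ⟨mem_ball_zero_iff.1 hpB.1, mem_ball_zero_iff.1 hpB.2, hp₁, hp₂⟩
  have hlim := tendsto_mul_sub_lensAverage hv (fun n x => (Circle.norm_coe (v n x)).le) hmem
    (hp.mono fun w hw hws => by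
      exact_mod_cast tendsto_circle_div_nhds_one_iff.1 (hw ⟨hmem, hws⟩))
  simpa only [add_sub_cancel_left] using hlim

lemma stronglyMeasurable_mul_sub_lensAverage {v : E → ℂ} (hv : Measurable v) :
    StronglyMeasurable fun p : E × E => v p.1 * v p.2 - lensAverage v (p.1 + p.2) :=
  (((hv.comp measurable_fst).mul (hv.comp measurable_snd)).sub
    ((measurable_lensAverage hv).comp measurable_add)).stronglyMeasurable

theorem quantitative_approximate_character_general (hE : 2 < finrank ℝ E) (ε : ℝ) (hε : 0 < ε) :
    ∃ δ : ℝ, 0 < δ ∧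
      ∀ G : Set (E × E), ((surfaceMeasure E).prod (surfaceMeasure E))
        ((sphere 0 1 ×ˢ sphere 0 1) \ G) < ENNReal.ofReal δ →
      ∀ φ ψ : E → ℝ, Measurable ψ →
        (∀ p ∈ G, ‖Complex.exp (Complex.I * ((φ p.1 + φ p.2 : ℝ) : ℂ))
            - Complex.exp (Complex.I * ((ψ (p.1 + p.2) : ℝ) : ℂ))‖ < δ) →
        ∃ B : Set (E × E), MeasurableSet B ∧ B ⊆ ball 0 2 ×ˢ ball 0 2 ∧
          volume B < ENNReal.ofReal ε ∧
          ∃ h : E → ℂ, Measurable h ∧ ∀ p ∈ (ball 0 2 ×ˢ ball 0 2) \ B,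
            ‖Complex.exp (Complex.I * ((ψ p.1 + ψ p.2 : ℝ) : ℂ)) - h (p.1 + p.2)‖ < ε := by
  by_contra! hcon
  choose G hG φ ψ hψ hclose hbad using fun n : ℕ => hcon ((1 / 2) ^ n) (by positivity)
  let v (n : ℕ) (x : E) : Circle := Circle.exp (ψ n x)
  have hv : ∀ n, Measurable fun x => (v n x : ℂ) := fun n => by
    simp only [v, Circle.coe_exp]
    fun_prop
  have hsphere := ae_tendsto_circle_exp_sub summable_geometric_two (fun n => by positivity)
    (fun n => (hG n).le) fun n p hp => (hclose n p hp).le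
  have hball := ae_tendsto_mul_sub_lensAverage (u := fun n x => Circle.exp (φ n x)) hv
    (by simpa only [v, Circle.coe_exp, ← Complex.exp_add, ← add_mul, ← Complex.ofReal_add,
      mul_comm Complex.I] using hsphere) hE
  obtain ⟨n, B, hB, hBs, hvol, hlt⟩ := (eventually_exists_measure_lt_forall_norm_lt
    (measurableSet_ball.prod measurableSet_ball)
    (isBounded_ball.prod isBounded_ball).measure_lt_top.ne
    (fun n => stronglyMeasurable_mul_sub_lensAverage (hv n)) hball hε
    (ENNReal.ofReal_pos.2 hε)).exists
  obtain ⟨p, hp, hge⟩ := hbad n B hB hBs hvol _ (measurable_lensAverage (hv n))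
  refine hge.not_gt ?_
  simpa only [v, Circle.coe_exp, ← Complex.exp_add, ← add_mul, ← Complex.ofReal_add,
    mul_comm Complex.I] using hlt p hp

end Transfer

lemma sphMeasure_eq_surfaceMeasure : sphMeasure = surfaceMeasure E3 := by
  have hdim : (finrank ℝ E3 : ℝ) - 1 = 2 := by
    rw [finrank_euclideanSpace_fin]
    norm_num
  rw [sphMeasure, surfaceMeasure, hdim, sph]

/-- **Quantitative transfer of the approximate functional equation from `S²` to `B(0,2)`.**
For any `ε > 0` there exists `δ > 0` with the following property.  Let `𝒢 ⊂ S²×S²` be a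
measurable set with `(σ×σ)((S²×S²)∖𝒢) < δ`, and let `φ : S² → ℝ`, `ψ : B(0,2) → ℝ` be
measurable functions with `|e^{i[φ(x)+φ(x')]} - e^{iψ(x+x')}| < δ` for all `(x,x') ∈ 𝒢`.
Then there exist a measurable set `ℰ ⊂ B(0,2)×B(0,2)` with Lebesgue measure `|ℰ| < ε` and a
measurable `h : B(0,4) → ℂ` such that
`|e^{i[ψ(z)+ψ(z')]} - h(z+z')| < ε` for all `(z,z') ∈ (B(0,2)×B(0,2)) ∖ ℰ`. -/
theorem quantitative_approximate_character (ε : ℝ) (hε : 0 < ε) :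
    ∃ δ : ℝ, 0 < δ ∧
      ∀ G : Set (E3 × E3), MeasurableSet G → G ⊆ sph ×ˢ sph →
        (sphMeasure.prod sphMeasure) ((sph ×ˢ sph) \ G) < ENNReal.ofReal δ →
      ∀ φ ψ : E3 → ℝ, Measurable φ → Measurable ψ →
        (∀ p ∈ G, ‖Complex.exp (Complex.I * ((φ p.1 + φ p.2 : ℝ) : ℂ))
            - Complex.exp (Complex.I * ((ψ (p.1 + p.2) : ℝ) : ℂ))‖ < δ) →
        ∃ E : Set (E3 × E3), MeasurableSet E ∧ E ⊆ ball (0 : E3) 2 ×ˢ ball (0 : E3) 2 ∧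
          (volume : Measure (E3 × E3)) E < ENNReal.ofReal ε ∧
          ∃ h : E3 → ℂ, Measurable h ∧
            ∀ p ∈ (ball (0 : E3) 2 ×ˢ ball (0 : E3) 2) \ E,
              ‖Complex.exp (Complex.I * ((ψ p.1 + ψ p.2 : ℝ) : ℂ)) - h (p.1 + p.2)‖ < ε := by
  obtain ⟨δ, hδ, hgeneral⟩ :=
    quantitative_approximate_character_general (E := E3) (by simp) ε hε
  rw [← sphMeasure_eq_surfaceMeasure] at hgeneral
  exact ⟨δ, hδ, fun G _ _ hG φ ψ _ hψ => hgeneral G hG φ ψ hψ⟩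

end
end

section
/- Let D ⊂ ℝ^d be a bounded open ball. For any ε > 0 there exists δ > 0 with the following property: if ψ : D → ℝ and h : D+D → ℂ are measurable functions such that the Lebesgue measure of {(x,y) ∈ D×D : |e^{i[ψ(x)+ψ(y)]} − h(x+y)| > δ} is less than δ, then there exist ξ ∈ ℝ^d and c ∈ ℂ with |c| = 1 such that ‖e^{iψ(x)} − c e^{ix·ξ}‖_{L²(D, dx)} < ε. -/
open MeasureTheory Metric
open scoped ENNReal RealInnerProductSpace

noncomputable section

/-!
Write `f = e^{iψ}`. Since `(x + s) + y = x + (y + s)`, the hypothesis gives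
`f (x + s) / f x ≈ f (y + s) / f y` for most `x, y`, so `f (x + s) / f x ≈ g s` for a function `g`
of the increment alone. Consequently the autocorrelation `⟪u, u (· + s)⟫` of `u = f * 1_D` is close
to `g s * |D|` for `s` in a small ball `S`. By Plancherel, `∫_S conj (g s) * ⟪u, u (· + s)⟫ ds` is
an average of `∫_S conj (g s) * e^{i s·ξ} ds` with weight `|𝓕 u ξ|²`; as it is nearly maximal, some
character `e^{i s·ξ}` is close to `g` on `S`.

To pass from small increments to all differences `y - x` of points of `D`, cut `y - x` into `N`
equal steps `s`; these stay in `D` by convexity, and telescoping gives `f y / f x ≈ (g s) ^ N`.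
Raising to the power `N` would amplify an error in `g s ≈ e^{i s·ξ}` that is not small compared with
`1 / N`, so the Fourier argument is applied to `f ^ N` and `g ^ N` instead: its error comes mainly
from the points of `D` near the boundary, and `(g s) ^ N ≈ e^{i s·ξ} = e^{i (y - x)·ξ/N}`.
Averaging over `x` then fixes the constant.
-/

open scoped ComplexConjugate FourierTransform Pointwise SchwartzMap

section IsometricGroup
variable {G : Type*} [CommGroup G] [PseudoEMetricSpace G] [IsIsometricSMul G G]

theorem edist_div_pow_le_sum (a : ℕ → G) (g : G) (n : ℕ) :
    edist (a n / a 0) (g ^ n) ≤ ∑ j ∈ Finset.range n, edist (a (j + 1) / a j) g := by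
  have hstep (j : ℕ) : edist (a j / g ^ j) (a (j + 1) / g ^ (j + 1)) =
      edist (a (j + 1) / a j) g := by
    rw [edist_comm, ← edist_mul_right _ _ (g ^ (j + 1) / a j)]
    congr 1
    · exact div_mul_div_cancel _ _ _
    · rw [mul_comm, div_mul_div_cancel, pow_succ', mul_div_cancel_right]
  calc edist (a n / a 0) (g ^ n) = edist (a 0 / g ^ 0) (a n / g ^ n) := by
        rw [edist_comm (a 0 / g ^ 0), ← edist_mul_right (a n / g ^ n) _ (g ^ n / a 0)]
        simp
    _ ≤ _ := edist_le_range_sum_edist (fun j => a j / g ^ j) n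
    _ = _ := Finset.sum_congr rfl fun j _ => hstep j

theorem edist_pow_pow_le (a b : G) (n : ℕ) : edist (a ^ n) (b ^ n) ≤ n * edist a b := by
  simpa [pow_succ'] using edist_div_pow_le_sum (a ^ ·) b n

end IsometricGroup

section CircleDistance

theorem circle_dist_eq_norm_sub (a b : Circle) : dist a b = ‖(a : ℂ) - b‖ := dist_eq_norm (a : ℂ) b

theorem circle_edist_eq_enorm_sub (a b : Circle) : edist a b = ‖(a : ℂ) - b‖ₑ :=
  edist_eq_enorm_sub (a : ℂ) b

theorem circle_enorm_coe (a : Circle) : ‖(a : ℂ)‖ₑ = 1 := by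
  rw [← ofReal_norm, Circle.norm_coe, ENNReal.ofReal_one]

instance circleIsIsometricSMul : IsIsometricSMul Circle Circle :=
  ⟨fun c a b => by simp [circle_edist_eq_enorm_sub, ← mul_sub, enorm_mul, circle_enorm_coe]⟩

variable (a b c : Circle)

theorem circle_edist_le_two : edist a b ≤ 2 := by
  rw [circle_edist_eq_enorm_sub]
  exact enorm_sub_le.trans_eq (by simp [circle_enorm_coe, one_add_one_eq_two])

theorem circle_edist_sq_le : edist a c ^ 2 ≤ 4 * edist a b + 2 * edist b c ^ 2 := by
  have hab : dist a b ≤ 2 := by simpa [edist_dist] using circle_edist_le_two a b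
  have h : dist a c ^ 2 ≤ 4 * dist a b + 2 * dist b c ^ 2 := by
    nlinarith [dist_triangle a b c, dist_nonneg (x := a) (y := b), dist_nonneg (x := a) (y := c),
      sq_nonneg (dist a b - dist b c)]
  simp only [edist_dist]
  convert ENNReal.ofReal_le_ofReal h using 1
  · exact (ENNReal.ofReal_pow dist_nonneg 2).symm
  · rw [ENNReal.ofReal_add (by positivity) (by positivity), ENNReal.ofReal_mul (by positivity),
      ENNReal.ofReal_mul (by positivity), ENNReal.ofReal_pow dist_nonneg]
    simp

theorem circle_dist_sq : dist a b ^ 2 = 2 - 2 * (conj (a : ℂ) * b).re := by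
  have h := norm_sub_sq (𝕜 := ℂ) (a : ℂ) b
  rw [RCLike.inner_apply', Circle.norm_coe, Circle.norm_coe, RCLike.re_eq_complex_re] at h
  rw [circle_dist_eq_norm_sub]
  linarith

theorem one_sub_dist_le_re_conj_mul : 1 - dist a b ≤ (conj (a : ℂ) * b).re := by
  have hab : dist a b ≤ 2 := by simpa [edist_dist] using circle_edist_le_two a b
  nlinarith [circle_dist_sq a b, dist_nonneg (x := a) (y := b)]

end CircleDistance

instance circleMeasurableSpace : MeasurableSpace Circle := borel Circle

instance circleBorelSpace : BorelSpace Circle := ⟨rfl⟩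

section Increments
variable {E : Type*} [AddCommGroup E]

/-- The error of approximating the multiplicative increment `f (x + s) / f x` by `z`, extended by
zero to the base points `x` for which `x` and `x + s` are not both in `D`. -/
def incrementError (D : Set E) (f : E → Circle) (s : E) (z : Circle) (x : E) : ℝ≥0∞ :=
  {x | x ∈ D ∧ x + s ∈ D}.indicator (fun x => edist (f (x + s) / f x) z) x

/-- The pairs in `D × D` at which `f x * f y` differs by more than `δ` from a given function of the
sum `x + y`. -/
def exceptionalSet (D : Set E) (f : E → Circle) (h : E → ℂ) (δ : ℝ) : Set (E × E) :=
  {p | p.1 ∈ D ∧ p.2 ∈ D ∧ δ < ‖(f p.1 * f p.2 : ℂ) - h (p.1 + p.2)‖}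

variable {D : Set E} {f : E → Circle} {h : E → ℂ} {δ : ℝ} {s x y : E} {z : Circle}

theorem incrementError_of_mem (hx : x ∈ D) (hxs : x + s ∈ D) :
    incrementError D f s z x = edist (f (x + s) / f x) z :=
  Set.indicator_of_mem (s := {x | x ∈ D ∧ x + s ∈ D}) ⟨hx, hxs⟩ _

theorem incrementError_of_not (h : ¬(x ∈ D ∧ x + s ∈ D)) : incrementError D f s z x = 0 :=
  Set.indicator_of_notMem (s := {x | x ∈ D ∧ x + s ∈ D}) h _

theorem incrementError_pow_le (n : ℕ) :
    incrementError D (f ^ n) s (z ^ n) x ≤ n * incrementError D f s z x := by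
  by_cases hx : x ∈ D ∧ x + s ∈ D
  · rw [incrementError_of_mem hx.1 hx.2, incrementError_of_mem hx.1 hx.2, Pi.pow_apply,
      Pi.pow_apply, ← div_pow]
    exact edist_pow_pow_le _ _ n
  · simp [incrementError_of_not hx]

theorem edist_mul_le_of_notMem_exceptionalSet {x' y' : E} (hx : x ∈ D) (hy : y ∈ D) (hx' : x' ∈ D)
    (hy' : y' ∈ D) (hxy : (x, y) ∉ exceptionalSet D f h δ)
    (hxy' : (x', y') ∉ exceptionalSet D f h δ) (hsum : x + y = x' + y') :
    edist (f x * f y) (f x' * f y') ≤ 2 * ENNReal.ofReal δ := by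
  simp only [exceptionalSet, Set.mem_ofPred_eq, not_and, not_lt] at hxy hxy'
  have hle := hxy hx hy
  have hle' := hxy' hx' hy'
  rw [← hsum] at hle'
  rw [circle_edist_eq_enorm_sub, ← ofReal_norm, two_mul]
  refine (ENNReal.ofReal_le_ofReal ?_).trans ENNReal.ofReal_add_le
  rw [Circle.coe_mul, Circle.coe_mul, ← sub_sub_sub_cancel_right _ _ (h (x + y))]
  exact (norm_sub_le _ _).trans (add_le_add hle hle')

theorem incrementError_le_indicator_add (hy : y ∈ D) (hys : y + s ∈ D) :
    incrementError D f s (f (y + s) / f y) x ≤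
      D.indicator (fun _ => 2 * ENNReal.ofReal δ) x +
      (exceptionalSet D f h δ).indicator (fun _ => 2) (x + s, y) +
      (exceptionalSet D f h δ).indicator (fun _ => 2) (x, y + s) := by
  by_cases hx : x ∈ D ∧ x + s ∈ D
  swap
  · simp [incrementError_of_not hx]
  obtain ⟨hx, hxs⟩ := hx
  rw [incrementError_of_mem hx hxs]
  by_cases hA : (x + s, y) ∈ exceptionalSet D f h δ
  · rw [Set.indicator_of_mem hA, add_right_comm]
    exact (circle_edist_le_two _ _).trans le_add_self
  by_cases hB : (x, y + s) ∈ exceptionalSet D f h δ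
  · rw [Set.indicator_of_mem hB]
    exact (circle_edist_le_two _ _).trans le_add_self
  rw [add_assoc, Set.indicator_of_mem hx]
  refine le_add_right ?_
  calc edist (f (x + s) / f x) (f (y + s) / f y)
      = edist (f (x + s) * f y) (f x * f (y + s)) := by
        rw [← edist_mul_right _ _ (f x * f y)]
        congr 1
        · rw [← mul_assoc, div_mul_cancel]
        · rw [mul_left_comm, div_mul_cancel]
    _ ≤ 2 * ENNReal.ofReal δ :=
        edist_mul_le_of_notMem_exceptionalSet hxs hy hx hys hA hB (by abel)

variable [MeasurableSpace E] [MeasurableAdd₂ E]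

theorem measurable_incrementError {α : Type*} [MeasurableSpace α] (hD : MeasurableSet D)
    (hf : Measurable f) {s x : α → E} {z : α → Circle} (hs : Measurable s) (hz : Measurable z)
    (hx : Measurable x) : Measurable fun a => incrementError D f (s a) (z a) (x a) :=
  Measurable.indicator (s := {a | x a ∈ D ∧ x a + s a ∈ D})
    (f := fun a => edist (f (x a + s a) / f (x a)) (z a)) (by fun_prop)
    ((hx hD).inter ((hx.add hs) hD))

theorem measurableSet_exceptionalSet (hD : MeasurableSet D) (hf : Measurable f)
    (hh : Measurable h) : MeasurableSet (exceptionalSet D f h δ) := by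
  have hdist : Measurable fun p : E × E => ‖(f p.1 * f p.2 : ℂ) - h (p.1 + p.2)‖ := by fun_prop
  exact (measurable_fst hD).inter <| (measurable_snd hD).inter <|
    measurableSet_lt measurable_const hdist

variable {μ : Measure E} [SFinite μ] [μ.IsAddRightInvariant] {S Y : Set E}

theorem lintegral_incrementError_le (hD : MeasurableSet D) (hY : MeasurableSet Y)
    (hf : Measurable f) (hh : Measurable h) (hYD : Y ⊆ D) (hYs : ∀ y ∈ Y, y + s ∈ D) :
    ∫⁻ y in Y, ∫⁻ x, incrementError D f s (f (y + s) / f y) x ∂μ ∂μ ≤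
      2 * ENNReal.ofReal δ * μ D * μ Y + 4 * μ.prod μ (exceptionalSet D f h δ) := by
  set Z := exceptionalSet D f h δ
  have hZ : MeasurableSet Z := measurableSet_exceptionalSet hD hf hh
  have hZ2 : Measurable (Z.indicator fun _ => (2 : ℝ≥0∞)) := measurable_const.indicator hZ
  have hZint : ∫⁻ y, ∫⁻ x, Z.indicator (fun _ => (2 : ℝ≥0∞)) (x, y) ∂μ ∂μ = 2 * μ.prod μ Z := by
    rw [← lintegral_prod_symm' _ hZ2, lintegral_indicator_const hZ]
  calc _ ≤ ∫⁻ y in Y, (∫⁻ x, D.indicator (fun _ => 2 * ENNReal.ofReal δ) x ∂μ +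
          ∫⁻ x, Z.indicator (fun _ => 2) (x, y) ∂μ +
          ∫⁻ x, Z.indicator (fun _ => 2) (x, y + s) ∂μ) ∂μ := by
        refine setLIntegral_mono' hY fun y hy => ?_
        rw [← lintegral_add_right_eq_self (fun x => Z.indicator (fun _ => (2 : ℝ≥0∞)) (x, y)) s,
          ← lintegral_add_right, ← lintegral_add_right]
        · exact lintegral_mono fun x => incrementError_le_indicator_add (hYD hy) (hYs y hy)
        · exact hZ2.comp (by fun_prop)
        · exact hZ2.comp (by fun_prop)
    _ = 2 * ENNReal.ofReal δ * μ D * μ Y +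
          ∫⁻ y in Y, ∫⁻ x, Z.indicator (fun _ => 2) (x, y) ∂μ ∂μ +
          ∫⁻ y in Y, ∫⁻ x, Z.indicator (fun _ => 2) (x, y + s) ∂μ ∂μ := by
        rw [lintegral_add_right, lintegral_add_right, lintegral_indicator_const hD,
          setLIntegral_const]
        · exact hZ2.lintegral_prod_left'
        · exact (hZ2.lintegral_prod_left' (μ := μ)).comp (measurable_add_const s)
    _ ≤ 2 * ENNReal.ofReal δ * μ D * μ Y + 2 * μ.prod μ Z + 2 * μ.prod μ Z := by
        gcongr
        · exact (setLIntegral_le_lintegral _ _).trans_eq hZint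
        · refine (setLIntegral_le_lintegral _ _).trans_eq ?_
          rw [lintegral_add_right_eq_self
            (fun y => ∫⁻ x, Z.indicator (fun _ => (2 : ℝ≥0∞)) (x, y) ∂μ) s, hZint]
    _ = _ := by ring

theorem exists_lintegral_incrementError_le (hD : MeasurableSet D) (hS : MeasurableSet S)
    (hY : MeasurableSet Y) (hf : Measurable f) (hh : Measurable h) (hYD : Y ⊆ D)
    (hYS : ∀ y ∈ Y, ∀ s ∈ S, y + s ∈ D) (hY0 : μ Y ≠ 0) (hYtop : μ Y ≠ ∞) :
    ∃ g : E → Circle, Measurable g ∧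
      μ Y * ∫⁻ s in S, ∫⁻ x, incrementError D f s (g s) x ∂μ ∂μ ≤
        μ S * (2 * ENNReal.ofReal δ * μ D * μ Y + 4 * μ.prod μ (exceptionalSet D f h δ)) := by
  have hmeas : Measurable fun p : E × E =>
      ∫⁻ x, incrementError D f p.2 (f (p.1 + p.2) / f p.1) x ∂μ :=
    (measurable_incrementError hD hf (s := fun q : (E × E) × E => q.1.2)
      (z := fun q => f (q.1.1 + q.1.2) / f q.1.1) (x := fun q => q.2)
      (by fun_prop) (by fun_prop) (by fun_prop)).lintegral_prod_right'
  obtain ⟨y, -, hy⟩ := exists_le_setLAverage hY0 hYtop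
    (f := fun y => ∫⁻ s in S, ∫⁻ x, incrementError D f s (f (y + s) / f y) x ∂μ ∂μ)
    hmeas.lintegral_prod_right'.aemeasurable
  refine ⟨fun s => f (y + s) / f y, by fun_prop, ?_⟩
  calc _ ≤ μ Y * ⨍⁻ y in Y, ∫⁻ s in S, ∫⁻ x,
          incrementError D f s (f (y + s) / f y) x ∂μ ∂μ ∂μ := by gcongr
    _ = ∫⁻ s in S, ∫⁻ y in Y, ∫⁻ x, incrementError D f s (f (y + s) / f y) x ∂μ ∂μ ∂μ := by
        rw [setLAverage_eq, ENNReal.mul_div_cancel hY0 hYtop,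
          lintegral_lintegral_swap hmeas.aemeasurable]
    _ ≤ ∫⁻ _ in S, (2 * ENNReal.ofReal δ * μ D * μ Y +
          4 * μ.prod μ (exceptionalSet D f h δ)) ∂μ :=
        setLIntegral_mono' hS fun s hs =>
          lintegral_incrementError_le hD hY hf hh hYD fun y hy => hYS y hy s hs
    _ = _ := by rw [setLIntegral_const, mul_comm]

theorem exists_pos_forall_lintegral_incrementError_lt (hD : MeasurableSet D) (hDtop : μ D ≠ ∞)
    (hS : MeasurableSet S) (hStop : μ S ≠ ∞) (hY : MeasurableSet Y) (hYD : Y ⊆ D)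
    (hYS : ∀ y ∈ Y, ∀ s ∈ S, y + s ∈ D) (hY0 : μ Y ≠ 0) {η : ℝ≥0∞} (hη : η ≠ 0) :
    ∃ δ : ℝ, 0 < δ ∧ ∀ (f : E → Circle) (h : E → ℂ), Measurable f → Measurable h →
      μ.prod μ (exceptionalSet D f h δ) ≤ ENNReal.ofReal δ →
      ∃ g : E → Circle, Measurable g ∧
        ∫⁻ s in S, ∫⁻ x, incrementError D f s (g s) x ∂μ ∂μ < η := by
  have hYtop : μ Y ≠ ∞ := measure_ne_top_of_subset hYD hDtop
  obtain ⟨δ, hδ, hlt⟩ := ENNReal.exists_nnreal_pos_mul_lt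
    (a := μ S * (2 * μ D * μ Y + 4)) (by finiteness) (mul_ne_zero hY0 hη)
  refine ⟨δ, hδ, fun f h hf hh hexc => ?_⟩
  obtain ⟨g, hg, hle⟩ := exists_lintegral_incrementError_le (δ := δ) hD hS hY hf hh hYD hYS hY0
    hYtop
  refine ⟨g, hg, lt_of_mul_lt_mul_left' (a := μ Y) ?_⟩
  calc _ ≤ _ := hle
    _ ≤ μ S * (2 * ENNReal.ofReal δ * μ D * μ Y + 4 * ENNReal.ofReal δ) := by gcongr
    _ = δ * (μ S * (2 * μ D * μ Y + 4)) := by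
        rw [ENNReal.ofReal_coe_nnreal]
        ring
    _ < μ Y * η := hlt

end Increments

section Translation
variable {E : Type*} [NormedAddCommGroup E] [InnerProductSpace ℝ E] [FiniteDimensional ℝ E]
  [MeasurableSpace E] [BorelSpace E]

local notation "L²" => Lp ℂ 2 (volume : Measure E)

/-- The translation `u ↦ u (· + s)` as an isometry of `L²`. -/
def lpTranslate (s : E) : L² →ₗᵢ[ℂ] L² :=
  Lp.compMeasurePreservingₗᵢ ℂ (· + s) (measurePreserving_add_right volume s)

theorem fourier_comp_add_right (F : E → ℂ) (s ξ : E) :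
    𝓕 (fun x => F (x + s)) ξ = Circle.exp ⟪s, (2 * Real.pi) • ξ⟫ * 𝓕 F ξ := by
  have h := congrFun (VectorFourier.fourierIntegral_comp_add_right Real.fourierChar volume
    (innerₗ E) F s) ξ
  rw [Circle.smul_def, smul_eq_mul, innerₗ_apply_apply, Real.fourierChar_apply'] at h
  rw [inner_smul_right]
  exact h

theorem lpTranslate_toLp {F : E → ℂ} (hF : MemLp F 2) (s : E) :
    lpTranslate s hF.toLp =ᵐ[volume] fun x => F (x + s) :=
  MemLp.coeFn_toLp (hF.comp_measurePreserving (measurePreserving_add_right volume s))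

theorem fourier_lpTranslate_toLp (φ : 𝓢(E, ℂ)) (s : E) :
    (𝓕 (lpTranslate s (φ.toLp 2)) : L²) =ᵐ[volume]
      fun ξ => Circle.exp ⟪s, (2 * Real.pi) • ξ⟫ * 𝓕 φ ξ := by
  have htranslate : lpTranslate s (φ.toLp 2) = (φ.compSubConstCLM ℂ (-s)).toLp 2 := by
    refine Lp.ext ((lpTranslate_toLp (φ.memLp 2) s).trans ?_)
    filter_upwards [(φ.compSubConstCLM ℂ (-s)).coeFn_toLp 2] with x hx
    simp [hx]
  rw [htranslate, SchwartzMap.toLp_fourier_eq]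
  filter_upwards [(𝓕 (φ.compSubConstCLM ℂ (-s))).coeFn_toLp 2] with ξ hξ
  have hφ : ⇑(φ.compSubConstCLM ℂ (-s)) = fun x => φ (x + s) := by ext; simp
  rw [hξ, SchwartzMap.fourier_coe, SchwartzMap.fourier_coe, ← fourier_comp_add_right, hφ]

theorem fourier_lpTranslate (u : L²) (s : E) :
    (𝓕 (lpTranslate s u) : L²) =ᵐ[volume]
      fun ξ => Circle.exp ⟪s, (2 * Real.pi) • ξ⟫ * (𝓕 u : L²) ξ := by
  have hchar : MemLp (fun ξ : E => (Circle.exp ⟪s, (2 * Real.pi) • ξ⟫ : ℂ)) ∞ :=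
    memLp_top_of_bound (Continuous.aestronglyMeasurable (by fun_prop)) 1 (by simp)
  let modulate : L² →L[ℂ] L² :=
    (ContinuousLinearMap.mul ℂ ℂ).holderL volume ∞ 2 2 hchar.toLp
  have hmodulate (u : L²) :
      modulate u =ᵐ[volume] fun ξ => Circle.exp ⟪s, (2 * Real.pi) • ξ⟫ * u ξ := by
    filter_upwards [(ContinuousLinearMap.mul ℂ ℂ).coeFn_holder (r := 2) hchar.toLp u,
      hchar.coeFn_toLp] with ξ hu hξ
    exact hu.trans (by rw [hξ]; rfl)
  have heq : (fun u : L² => (𝓕 (lpTranslate s u) : L²)) = fun u => modulate (𝓕 u) := by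
    refine (SchwartzMap.denseRange_toLpCLM (F := ℂ) (p := 2) (μ := (volume : Measure E))
      ENNReal.ofNat_ne_top).equalizer (by fun_prop) (by fun_prop) ?_
    funext φ
    refine Lp.ext ((fourier_lpTranslate_toLp φ s).trans ?_)
    filter_upwards [hmodulate (𝓕 (φ.toLp 2)), (𝓕 φ).coeFn_toLp 2] with ξ hξ hφ
    rw [← hφ, ← SchwartzMap.toLp_fourier_eq]
    exact hξ.symm
  rw [congrFun heq u]
  exact hmodulate _

theorem inner_lpTranslate (u : L²) (s : E) :
    inner ℂ u (lpTranslate s u) =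
      ∫ ξ, Circle.exp ⟪s, (2 * Real.pi) • ξ⟫ * ((‖(𝓕 u : L²) ξ‖ ^ 2 : ℝ) : ℂ) := by
  rw [← Lp.inner_fourier_eq, L2.inner_def]
  refine integral_congr_ae ?_
  filter_upwards [fourier_lpTranslate u s] with ξ hξ
  rw [hξ, RCLike.inner_apply, mul_assoc, Complex.mul_conj']
  push_cast
  rfl

variable {ν : Measure E}

theorem integrable_mul_exp_mul {K w : E → ℂ} (hK : Integrable K ν) (hw : Integrable w) :
    Integrable (fun p : E × E => K p.1 * (Circle.exp ⟪p.1, (2 * Real.pi) • p.2⟫ * w p.2))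
      (ν.prod volume) :=
  ((hK.mul_prod hw).bdd_mul (c := 1)
    (f := fun p : E × E => (Circle.exp ⟪p.1, (2 * Real.pi) • p.2⟫ : ℂ))
    (Continuous.aestronglyMeasurable (by fun_prop)) (by simp)).congr
    (.of_forall fun p => mul_left_comm _ _ _)

theorem integrable_norm_sq_coeFn (u : L²) : Integrable fun ξ => ‖u ξ‖ ^ 2 :=
  (memLp_two_iff_integrable_sq_norm (Lp.aestronglyMeasurable u)).1 (Lp.memLp u)

theorem integral_norm_sq_coeFn (u : L²) : ∫ ξ, ‖u ξ‖ ^ 2 = ‖u‖ ^ 2 := by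
  rw [← inner_self_eq_norm_sq (𝕜 := ℂ), L2.inner_def, ← integral_re (L2.integrable_inner u u)]
  simp only [inner_self_eq_norm_sq]

theorem integrable_mul_inner_lpTranslate {K : E → ℂ} (hK : Integrable K ν) (u : L²) :
    Integrable (fun s => K s * inner ℂ u (lpTranslate s u)) ν := by
  have hw : Integrable fun ξ => ((‖(𝓕 u : L²) ξ‖ ^ 2 : ℝ) : ℂ) :=
    (integrable_norm_sq_coeFn (𝓕 u)).ofReal
  simpa only [integral_const_mul, ← inner_lpTranslate] using
    (integrable_mul_exp_mul hK hw).integral_prod_left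

theorem re_integral_mul_inner_lpTranslate_le [SFinite ν] {K : E → ℂ} (hK : Integrable K ν) {c : ℝ}
    (hc : ∀ ξ : E, (∫ s, K s * Circle.exp ⟪s, ξ⟫ ∂ν).re ≤ c) (u : L²) :
    (∫ s, K s * inner ℂ u (lpTranslate s u) ∂ν).re ≤ c * ‖u‖ ^ 2 := by
  have hw := integrable_norm_sq_coeFn (𝓕 u)
  have hwc : Integrable fun ξ => ((‖(𝓕 u : L²) ξ‖ ^ 2 : ℝ) : ℂ) := hw.ofReal
  have hprod := integrable_mul_exp_mul hK hwc
  have hswap : ∫ s, K s * inner ℂ u (lpTranslate s u) ∂ν =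
      ∫ ξ, (∫ s, K s * Circle.exp ⟪s, (2 * Real.pi) • ξ⟫ ∂ν) * ((‖(𝓕 u : L²) ξ‖ ^ 2 : ℝ) : ℂ) := by
    simp_rw [inner_lpTranslate, ← integral_const_mul, ← integral_mul_const, mul_assoc]
    exact integral_integral_swap hprod
  have hint : Integrable fun ξ =>
      (∫ s, K s * Circle.exp ⟪s, (2 * Real.pi) • ξ⟫ ∂ν) * ((‖(𝓕 u : L²) ξ‖ ^ 2 : ℝ) : ℂ) := by
    simpa only [← integral_mul_const, mul_assoc] using hprod.integral_prod_right
  calc _ = ∫ ξ, (∫ s, K s * Circle.exp ⟪s, (2 * Real.pi) • ξ⟫ ∂ν).re * ‖(𝓕 u : L²) ξ‖ ^ 2 := by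
        rw [hswap, ← RCLike.re_eq_complex_re, ← integral_re hint]
        simp only [RCLike.re_eq_complex_re, Complex.re_mul_ofReal]
    _ ≤ ∫ ξ, c * ‖(𝓕 u : L²) ξ‖ ^ 2 := by
        refine integral_mono ?_ (hw.const_mul c) fun ξ =>
          mul_le_mul_of_nonneg_right (hc _) (sq_nonneg _)
        simpa only [RCLike.re_eq_complex_re, Complex.re_mul_ofReal] using hint.re
    _ = c * ‖u‖ ^ 2 := by
        rw [integral_const_mul, integral_norm_sq_coeFn, Lp.norm_fourier_eq]

section FiniteMeasure
variable {α : Type*} [MeasurableSpace α] {μ : Measure α} [IsFiniteMeasure μ] {g χ : α → Circle}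

theorem integrable_conj_circle (hg : Measurable g) : Integrable (fun s => conj (g s : ℂ)) μ :=
  .of_bound (by fun_prop) 1 (.of_forall fun s => by simp [Circle.norm_coe])

theorem re_integral_conj_mul (hg : Measurable g) (hχ : Measurable χ) :
    (∫ s, conj (g s : ℂ) * χ s ∂μ).re =
      μ.real Set.univ - (∫⁻ s, edist (g s) (χ s) ^ 2 ∂μ).toReal / 2 := by
  have hint : Integrable (fun s => conj (g s : ℂ) * χ s) μ :=
    .of_bound (by fun_prop) 1 (.of_forall fun s => by simp [Circle.norm_coe])
  have hdist : Integrable (fun s => dist (g s) (χ s) ^ 2 / 2) μ := by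
    refine (integrable_const 1).sub hint.re |>.congr (.of_forall fun s => ?_)
    simp only [Pi.sub_apply, RCLike.re_eq_complex_re, circle_dist_sq]
    ring
  have hedist : (∫⁻ s, edist (g s) (χ s) ^ 2 ∂μ).toReal = ∫ s, dist (g s) (χ s) ^ 2 ∂μ := by
    rw [integral_eq_lintegral_of_nonneg_ae (.of_forall fun s => sq_nonneg _) (by fun_prop)]
    simp only [edist_dist, ENNReal.ofReal_pow dist_nonneg]
  have hpointwise (s : α) : (conj (g s : ℂ) * χ s).re = 1 - dist (g s) (χ s) ^ 2 / 2 := by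
    rw [circle_dist_sq]
    ring
  rw [← RCLike.re_eq_complex_re, ← integral_re hint]
  simp only [RCLike.re_eq_complex_re, hpointwise]
  rw [integral_sub (integrable_const 1) hdist, integral_const, smul_eq_mul, mul_one,
    integral_div, hedist]

theorem re_integral_conj_mul_le (hg : Measurable g) (hχ : Measurable χ) {b : ℝ≥0∞}
    (hb : b ≤ ∫⁻ s, edist (g s) (χ s) ^ 2 ∂μ) :
    (∫ s, conj (g s : ℂ) * χ s ∂μ).re ≤ μ.real Set.univ - b.toReal / 2 := by
  have hfin : ∫⁻ s, edist (g s) (χ s) ^ 2 ∂μ ≠ ∞ := by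
    refine ne_top_of_le_ne_top (b := ∫⁻ _, 2 ^ 2 ∂μ) ?_
      (lintegral_mono fun s => pow_le_pow_left' (circle_edist_le_two _ _) 2)
    rw [lintegral_const]
    finiteness
  rw [re_integral_conj_mul hg hχ]
  gcongr

end FiniteMeasure

theorem indicator_sub_incrementError_le {E : Type*} [AddCommGroup E] {D D' : Set E}
    {f : E → Circle} {s x : E} {z : Circle} (hD'D : D' ⊆ D) (hD's : ∀ x ∈ D', x + s ∈ D) :
    D'.indicator 1 x - (incrementError D f s z x).toReal ≤
      (conj (z : ℂ) * (conj (D.indicator (fun x => (f x : ℂ)) x) *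
        D.indicator (fun x => (f x : ℂ)) (x + s))).re := by
  by_cases hx : x ∈ D ∧ x + s ∈ D
  · have hdiv : ((f (x + s) / f x : Circle) : ℂ) = conj (f x : ℂ) * f (x + s) := by
      rw [div_eq_inv_mul, Circle.coe_mul, Circle.coe_inv_eq_conj]
    have hind : D'.indicator 1 x ≤ (1 : ℝ) :=
      Set.indicator_apply_le' (fun _ => le_rfl) fun _ => zero_le_one
    rw [incrementError_of_mem hx.1 hx.2, ← dist_edist, dist_comm, Set.indicator_of_mem hx.1,
      Set.indicator_of_mem hx.2, ← hdiv]
    exact (sub_le_sub_right hind _).trans (one_sub_dist_le_re_conj_mul _ _)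
  · have hxD' : x ∉ D' := fun h => hx ⟨hD'D h, hD's x h⟩
    have hxD : D.indicator (fun x => (f x : ℂ)) x = 0 ∨
        D.indicator (fun x => (f x : ℂ)) (x + s) = 0 := by
      rw [not_and_or] at hx
      exact hx.imp (Set.indicator_of_notMem · _) (Set.indicator_of_notMem · _)
    rcases hxD with h | h <;> simp [incrementError_of_not hx, hxD', h]

variable {D : Set E} {f : E → Circle}

theorem memLp_indicator_circle (hD : MeasurableSet D) (hDtop : volume D ≠ ∞)
    (hf : Measurable f) : MemLp (D.indicator fun x => (f x : ℂ)) 2 := by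
  have : IsFiniteMeasure (volume.restrict D) := isFiniteMeasure_restrict.2 hDtop
  exact (memLp_indicator_iff_restrict hD).2 <|
    MemLp.of_bound (by fun_prop) 1 (.of_forall fun x => by simp [Circle.norm_coe])

theorem norm_toLp_indicator_circle_sq (hD : MeasurableSet D) (hDtop : volume D ≠ ∞)
    (hf : Measurable f) :
    ‖(memLp_indicator_circle hD hDtop hf).toLp‖ ^ 2 = volume.real D := by
  rw [← integral_norm_sq_coeFn, ← integral_indicator_one hD]
  refine integral_congr_ae ?_
  filter_upwards [(memLp_indicator_circle hD hDtop hf).coeFn_toLp] with x hx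
  rw [hx]
  by_cases hxD : x ∈ D <;> simp [hxD, Circle.norm_coe]

theorem inner_lpTranslate_toLp {F : E → ℂ} (hF : MemLp F 2) (s : E) :
    inner ℂ hF.toLp (lpTranslate s hF.toLp) = ∫ x, conj (F x) * F (x + s) := by
  rw [L2.inner_def]
  refine integral_congr_ae ?_
  filter_upwards [hF.coeFn_toLp, lpTranslate_toLp hF s] with x hx hxs
  rw [hx, hxs, RCLike.inner_apply']

theorem lintegral_incrementError_ne_top (hD : MeasurableSet D) (hDtop : volume D ≠ ∞) (s : E)
    (z : Circle) : ∫⁻ x, incrementError D f s z x ≠ ∞ := by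
  have hle : ∫⁻ x, incrementError D f s z x ≤ ∫⁻ x, D.indicator (fun _ => 2) x := by
    refine lintegral_mono fun x => ?_
    by_cases hx : x ∈ D ∧ x + s ∈ D
    · rw [incrementError_of_mem hx.1 hx.2, Set.indicator_of_mem hx.1]
      exact circle_edist_le_two _ _
    · rw [incrementError_of_not hx]
      exact zero_le
  rw [lintegral_indicator_const hD] at hle
  exact (hle.trans_lt (ENNReal.mul_lt_top (by simp) hDtop.lt_top)).ne

theorem measureReal_sub_le_re_conj_mul_inner {D' : Set E} {s : E} {z : Circle}
    (hD : MeasurableSet D) (hDtop : volume D ≠ ∞) (hD' : MeasurableSet D') (hf : Measurable f)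
    (hD'D : D' ⊆ D) (hD's : ∀ x ∈ D', x + s ∈ D) :
    volume.real D' - (∫⁻ x, incrementError D f s z x).toReal ≤
      (conj (z : ℂ) * inner ℂ (memLp_indicator_circle hD hDtop hf).toLp
        (lpTranslate s (memLp_indicator_circle hD hDtop hf).toLp)).re := by
  have hF := memLp_indicator_circle hD hDtop hf
  have herr : Measurable fun x => incrementError D f s z x :=
    measurable_incrementError hD hf measurable_const measurable_const measurable_id
  have hfin := lintegral_incrementError_ne_top (f := f) hD hDtop s z
  have hD'int : Integrable (D'.indicator (1 : E → ℝ)) :=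
    (integrable_indicator_iff hD').2 (integrableOn_const (measure_ne_top_of_subset hD'D hDtop))
  have hFint : Integrable fun x => conj (z : ℂ) *
      (conj (D.indicator (fun x => (f x : ℂ)) x) * D.indicator (fun x => (f x : ℂ)) (x + s)) :=
    (hF.star.integrable_mul
      (hF.comp_measurePreserving (measurePreserving_add_right volume s))).const_mul _
  rw [inner_lpTranslate_toLp, ← integral_const_mul, ← integral_indicator_one hD',
    ← integral_toReal herr.aemeasurable (ae_lt_top herr hfin),
    ← integral_sub hD'int (integrable_toReal_of_lintegral_ne_top herr.aemeasurable hfin),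
    ← RCLike.re_eq_complex_re, ← integral_re hFint]
  exact integral_mono
    (hD'int.sub (integrable_toReal_of_lintegral_ne_top herr.aemeasurable hfin)) hFint.re
    fun x => indicator_sub_incrementError_le hD'D hD's

variable {D' S : Set E} {g : E → Circle}

theorem measureReal_mul_sub_le_re_integral_mul_inner (hD : MeasurableSet D) (hDtop : volume D ≠ ∞)
    (hD' : MeasurableSet D') (hS : MeasurableSet S) (hStop : volume S ≠ ∞) (hf : Measurable f)
    (hg : Measurable g) (hD'D : D' ⊆ D) (hD'S : ∀ x ∈ D', ∀ s ∈ S, x + s ∈ D)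
    (herr : ∫⁻ s in S, ∫⁻ x, incrementError D f s (g s) x ≠ ∞) :
    volume.real S * volume.real D' -
        (∫⁻ s in S, ∫⁻ x, incrementError D f s (g s) x).toReal ≤
      (∫ s in S, conj (g s : ℂ) * inner ℂ (memLp_indicator_circle hD hDtop hf).toLp
        (lpTranslate s (memLp_indicator_circle hD hDtop hf).toLp)).re := by
  have : IsFiniteMeasure (volume.restrict S) := isFiniteMeasure_restrict.2 hStop
  have hmeas : Measurable fun s => ∫⁻ x, incrementError D f s (g s) x :=
    (measurable_incrementError hD hf (s := fun q : E × E => q.1) (z := fun q => g q.1)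
      (x := fun q => q.2) (by fun_prop) (by fun_prop) (by fun_prop)).lintegral_prod_right'
  have hint := integrable_mul_inner_lpTranslate (ν := volume.restrict S)
    (integrable_conj_circle hg) (memLp_indicator_circle hD hDtop hf).toLp
  have herrint := integrable_toReal_of_lintegral_ne_top hmeas.aemeasurable.restrict herr
  rw [← smul_eq_mul, ← setIntegral_const,
    ← integral_toReal hmeas.aemeasurable.restrict (ae_lt_top hmeas herr),
    ← integral_sub (integrable_const _) herrint, ← RCLike.re_eq_complex_re, ← integral_re hint]
  exact setIntegral_mono_on ((integrable_const _).sub herrint) hint.re hS fun s hs =>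
    measureReal_sub_le_re_conj_mul_inner hD hDtop hD' hf hD'D fun x hx => hD'S x hx s hs

theorem exists_lintegral_edist_exp_sq_le (hD : MeasurableSet D) (hDtop : volume D ≠ ∞)
    (hD' : MeasurableSet D') (hS : MeasurableSet S) (hStop : volume S ≠ ∞) (hf : Measurable f)
    (hg : Measurable g) (hD'D : D' ⊆ D) (hD'S : ∀ x ∈ D', ∀ s ∈ S, x + s ∈ D) {η : ℝ≥0∞}
    (hη : η ≠ ∞) (herr : ∫⁻ s in S, ∫⁻ x, incrementError D f s (g s) x < η) :
    ∃ ξ : E, volume D * ∫⁻ s in S, edist (g s) (Circle.exp ⟪s, ξ⟫) ^ 2 ≤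
      2 * (volume S * volume (D \ D') + η) := by
  have : IsFiniteMeasure (volume.restrict S) := isFiniteMeasure_restrict.2 hStop
  by_contra! hfar
  have hD0 : volume D ≠ 0 := fun h0 => by simpa [h0] using hfar 0
  have hD0' : 0 < volume.real D := ENNReal.toReal_pos hD0 hDtop
  have hKξ (ξ : E) := re_integral_conj_mul_le hg (χ := fun s => Circle.exp ⟪s, ξ⟫)
    (by fun_prop) (ENNReal.div_le_of_le_mul' (hfar ξ).le)
  have hle := (measureReal_mul_sub_le_re_integral_mul_inner hD hDtop hD' hS hStop hf hg hD'D hD'S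
    herr.ne_top).trans (re_integral_mul_inner_lpTranslate_le (integrable_conj_circle hg) hKξ _)
  have hlt := ENNReal.toReal_strict_mono hη herr
  have hsub := measureReal_sdiff (μ := volume) hD'D hD' hDtop
  have hdiff : volume S * volume (D \ D') ≠ ∞ :=
    ENNReal.mul_ne_top hStop (measure_ne_top_of_subset Set.sdiff_subset hDtop)
  rw [norm_toLp_indicator_circle_sq hD hDtop hf, ENNReal.toReal_div, ENNReal.toReal_mul,
    ENNReal.toReal_add hdiff hη, ENNReal.toReal_mul, ENNReal.toReal_ofNat,
    measureReal_restrict_apply_univ] at hle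
  simp only [← measureReal_def, hsub] at hle
  field_simp at hle
  linarith

end Translation

section LargeIncrements
variable {E : Type*} [NormedAddCommGroup E] [NormedSpace ℝ E] {D S : Set E} {f : E → Circle}

theorem edist_div_pow_le_sum_incrementError (hD : Convex ℝ D) {x s : E} {N : ℕ} (hx : x ∈ D)
    (hxs : x + (N : ℝ) • s ∈ D) (z : Circle) :
    edist (f (x + (N : ℝ) • s) / f x) (z ^ N) ≤
      ∑ j ∈ Finset.range N, incrementError D f s z (x + (j : ℝ) • s) := by
  have hmem {j : ℕ} (hj : j ≤ N) : x + (j : ℝ) • s ∈ D := by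
    rcases eq_or_ne N 0 with rfl | hN
    · rwa [Nat.le_zero.1 hj]
    have hN' : (N : ℝ) ≠ 0 := Nat.cast_ne_zero.2 hN
    have h := hD.add_smul_mem hx hxs (t := j / N)
      ⟨by positivity, div_le_one_of_le₀ (Nat.cast_le.2 hj) (Nat.cast_nonneg N)⟩
    rwa [smul_smul, div_mul_cancel₀ _ hN'] at h
  have hstep (j : ℕ) : x + (j : ℝ) • s + s = x + ((j + 1 : ℕ) : ℝ) • s := by
    rw [Nat.cast_succ, add_smul, one_smul, add_assoc]
  calc edist (f (x + (N : ℝ) • s) / f x) (z ^ N)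
      ≤ ∑ j ∈ Finset.range N,
          edist (f (x + ((j + 1 : ℕ) : ℝ) • s) / f (x + (j : ℝ) • s)) z := by
        simpa using edist_div_pow_le_sum (fun j : ℕ => f (x + (j : ℝ) • s)) z N
    _ = _ := by
        refine Finset.sum_congr rfl fun j hj => ?_
        have hj' := Finset.mem_range.1 hj
        rw [incrementError_of_mem (hmem hj'.le) (hstep j ▸ hmem hj'), hstep]

theorem incrementError_smul_sq_le (hD : Convex ℝ D) (N : ℕ) (s x : E) (z w : Circle) :
    incrementError D f ((N : ℝ) • s) w x ^ 2 ≤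
      4 * ∑ j ∈ Finset.range N, incrementError D f s z (x + (j : ℝ) • s) +
        D.indicator (fun _ => 2 * edist (z ^ N) w ^ 2) x := by
  by_cases hx : x ∈ D ∧ x + (N : ℝ) • s ∈ D
  · rw [incrementError_of_mem hx.1 hx.2, Set.indicator_of_mem hx.1]
    refine (circle_edist_sq_le _ (z ^ N) _).trans ?_
    gcongr
    exact edist_div_pow_le_sum_incrementError hD hx.1 hx.2 z
  · simp [incrementError_of_not hx]

variable [MeasurableSpace E] [BorelSpace E] [FiniteDimensional ℝ E]
  {μ : Measure E} [μ.IsAddHaarMeasure]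

theorem lintegral_incrementError_smul_sq_le (hD : Convex ℝ D) (hDm : MeasurableSet D)
    (hf : Measurable f) (N : ℕ) (s : E) (z w : Circle) :
    ∫⁻ x, incrementError D f ((N : ℝ) • s) w x ^ 2 ∂μ ≤
      4 * N * ∫⁻ x, incrementError D f s z x ∂μ + 2 * μ D * edist (z ^ N) w ^ 2 := by
  have hmeas : Measurable fun x => incrementError D f s z x :=
    measurable_incrementError hDm hf measurable_const measurable_const measurable_id
  have hshift (j : ℕ) : Measurable fun x => incrementError D f s z (x + (j : ℝ) • s) :=
    hmeas.comp (measurable_add_const _)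
  calc _ ≤ ∫⁻ x, (4 * ∑ j ∈ Finset.range N, incrementError D f s z (x + (j : ℝ) • s) +
          D.indicator (fun _ => 2 * edist (z ^ N) w ^ 2) x) ∂μ :=
        lintegral_mono fun x => incrementError_smul_sq_le hD N s x z w
    _ = 4 * ∑ j ∈ Finset.range N, ∫⁻ x, incrementError D f s z (x + (j : ℝ) • s) ∂μ +
          2 * edist (z ^ N) w ^ 2 * μ D := by
        rw [lintegral_add_right _ (measurable_const.indicator hDm),
          lintegral_indicator_const hDm, lintegral_const_mul _
          (Finset.measurable_fun_sum _ fun j _ => hshift j),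
          lintegral_finsetSum _ fun j _ => hshift j]
    _ = _ := by
        simp only [lintegral_add_right_eq_self (fun x => incrementError D f s z x),
          Finset.sum_const, Finset.card_range, nsmul_eq_mul]
        ring

theorem lintegral_eq_mul_lintegral_comp_smul (φ : E → ℝ≥0∞) (hφ : Measurable φ) {R : ℝ}
    (hR : 0 < R) :
    ∫⁻ t, φ t ∂μ = ENNReal.ofReal R ^ Module.finrank ℝ E * ∫⁻ s, φ (R • s) ∂μ := by
  have hpow : ENNReal.ofReal (R ^ Module.finrank ℝ E) ≠ 0 := by simpa using by positivity
  rw [← lintegral_map hφ (measurable_const_smul R), Measure.map_addHaar_smul _ hR.ne',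
    lintegral_smul_measure, abs_of_pos (by positivity), smul_eq_mul, ← mul_assoc,
    ← ENNReal.ofReal_pow hR.le, ENNReal.ofReal_inv_of_pos (by positivity),
    ENNReal.mul_inv_cancel hpow ENNReal.ofReal_ne_top, one_mul]

theorem setLIntegral_setLIntegral_edist_div_sq (hD : MeasurableSet D) (hf : Measurable f)
    {χ : E → Circle} (hχ : Measurable χ) :
    ∫⁻ x in D, ∫⁻ y in D, edist (f y / f x) (χ (y - x)) ^ 2 ∂μ ∂μ =
      ∫⁻ t, ∫⁻ x, incrementError D f t (χ t) x ^ 2 ∂μ ∂μ := by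
  have hmeas : Measurable fun p : E × E => incrementError D f p.2 (χ p.2) p.1 ^ 2 :=
    (measurable_incrementError hD hf measurable_snd (hχ.comp measurable_snd)
      measurable_fst).pow_const 2
  rw [lintegral_lintegral_swap (f := fun t x => incrementError D f t (χ t) x ^ 2)
    (hmeas.comp measurable_swap).aemeasurable, ← lintegral_indicator hD]
  congr 1 with x
  by_cases hx : x ∈ D
  · rw [Set.indicator_of_mem hx, ← lintegral_indicator hD, ← lintegral_add_left_eq_self _ x]
    congr 1 with t
    by_cases hxt : x + t ∈ D
    · rw [Set.indicator_of_mem hxt, incrementError_of_mem hx hxt, add_sub_cancel_left]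
    · rw [Set.indicator_of_notMem hxt, incrementError_of_not fun h => hxt h.2, zero_pow two_ne_zero]
  · simp [hx, incrementError_of_not fun h => hx h.1]

theorem setLIntegral_setLIntegral_edist_div_sq_le (hD : Convex ℝ D) (hDm : MeasurableSet D)
    (hf : Measurable f) {g χ : E → Circle} (hg : Measurable g)
    (hχ : Measurable χ) {N : ℕ} (hN : N ≠ 0)
    (hDS : ∀ x ∈ D, ∀ s, x + (N : ℝ) • s ∈ D → s ∈ S) :
    ∫⁻ x in D, ∫⁻ y in D, edist (f y / f x) (χ (y - x)) ^ 2 ∂μ ∂μ ≤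
      N ^ Module.finrank ℝ E *
        (4 * N * ∫⁻ s in S, ∫⁻ x, incrementError D f s (g s) x ∂μ ∂μ +
          2 * μ D * ∫⁻ s in S, edist (g s ^ N) (χ ((N : ℝ) • s)) ^ 2 ∂μ) := by
  have hmeas : Measurable fun t => ∫⁻ x, incrementError D f t (χ t) x ^ 2 ∂μ :=
    ((measurable_incrementError hDm hf measurable_fst (hχ.comp measurable_fst)
      measurable_snd).pow_const 2).lintegral_prod_right'
  have herr : Measurable fun s => ∫⁻ x, incrementError D f s (g s) x ∂μ :=
    (measurable_incrementError hDm hf measurable_fst (hg.comp measurable_fst)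
      measurable_snd).lintegral_prod_right'
  have hsupp : (fun s => ∫⁻ x, incrementError D f ((N : ℝ) • s) (χ ((N : ℝ) • s)) x ^ 2
      ∂μ).support ⊆ S := by
    refine fun s hs => by_contra fun hsS => hs ?_
    simp [incrementError_of_not fun h => hsS (hDS _ h.1 s h.2)]
  rw [setLIntegral_setLIntegral_edist_div_sq hDm hf hχ,
    lintegral_eq_mul_lintegral_comp_smul _ hmeas (R := N) (by positivity), ENNReal.ofReal_natCast,
    ← setLIntegral_eq_of_support_subset hsupp]
  gcongr
  calc _ ≤ ∫⁻ s in S, (4 * N * ∫⁻ x, incrementError D f s (g s) x ∂μ +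
          2 * μ D * edist (g s ^ N) (χ ((N : ℝ) • s)) ^ 2) ∂μ :=
        lintegral_mono fun s => lintegral_incrementError_smul_sq_le hD hDm hf N s _ _
    _ = _ := by
        rw [lintegral_add_left (herr.const_mul _), lintegral_const_mul _ herr,
          lintegral_const_mul _ (by fun_prop)]

end LargeIncrements

section Erosion

/-- The points of `X` at distance at least `r` from the complement of `D`; for `r > 0` a subset
of `D` whose translates by vectors shorter than `r` stay in `D`. -/
def erosion {X : Type*} [PseudoEMetricSpace X] (r : ℝ) (D : Set X) : Set X :=
  (thickening r Dᶜ)ᶜ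

theorem add_mem_of_mem_erosion {E : Type*} [SeminormedAddCommGroup E] {D : Set E} {x s : E} {r : ℝ}
    (hx : x ∈ erosion r D) (hs : s ∈ ball 0 r) : x + s ∈ D := by
  by_contra hxs
  exact hx (mem_thickening_iff.2 ⟨x + s, hxs, by simpa using hs⟩)

section PseudoMetricSpace
variable {X : Type*} [PseudoMetricSpace X] {D : Set X}

theorem erosion_subset {r : ℝ} (hr : 0 < r) : erosion r D ⊆ D :=
  Set.compl_subset_comm.1 (self_subset_thickening hr _)

variable [MeasurableSpace X] [OpensMeasurableSpace X]

theorem measurableSet_erosion (r : ℝ) : MeasurableSet (erosion r D) :=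
  isOpen_thickening.measurableSet.compl

theorem exists_nat_measure_sdiff_erosion_lt {μ : Measure X} (hD : IsOpen D)
    (hDtop : μ D ≠ ∞) {R : ℝ} (hR : 0 < R) {κ : ℝ≥0∞} (hκ : 0 < κ) :
    ∃ N : ℕ, N ≠ 0 ∧ μ (D \ erosion (R / N) D) < κ := by
  have : IsFiniteMeasure (μ.restrict D) := isFiniteMeasure_restrict.2 hDtop
  have hlim := tendsto_measure_thickening (μ := μ.restrict D) (s := Dᶜ)
    ⟨1, one_pos, measure_ne_top _ _⟩
  rw [hD.isClosed_compl.closure_eq, Measure.restrict_apply hD.measurableSet.compl,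
    Set.compl_inter_self, measure_empty] at hlim
  have hscale : Filter.Tendsto (fun N : ℕ => R / N) .atTop (nhdsWithin 0 (.Ioi 0)) :=
    tendsto_nhdsWithin_iff.2 ⟨tendsto_const_div_atTop_nhds_zero_nat R,
      (Filter.eventually_gt_atTop 0).mono fun N hN => div_pos hR (Nat.cast_pos.2 hN)⟩
  obtain ⟨N, hN, hN0⟩ := (((hlim.comp hscale).eventually_lt_const hκ).and
    (Filter.eventually_ne_atTop 0)).exists
  refine ⟨N, hN0, ?_⟩
  rwa [erosion, Set.sdiff_compl, Set.inter_comm,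
    ← Measure.restrict_apply isOpen_thickening.measurableSet]

end PseudoMetricSpace

theorem exists_nat_mul_measure_sdiff_erosion_lt {E : Type*} [NormedAddCommGroup E] [NormedSpace ℝ E]
    [FiniteDimensional ℝ E] [MeasurableSpace E] [BorelSpace E] {μ : Measure E}
    [μ.IsAddHaarMeasure] {D : Set E} (hD : IsOpen D) (hDtop : μ D ≠ ∞) {R : ℝ} (hR : 0 < R)
    {κ τ : ℝ≥0∞} (hκ : κ ≠ 0) (hτ : τ ≠ 0) :
    ∃ N : ℕ, N ≠ 0 ∧ μ (D \ erosion (R / N) D) < κ ∧ ∃ η : ℝ≥0∞, η ≠ 0 ∧ η ≠ ∞ ∧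
      N ^ Module.finrank ℝ E *
        (8 * N * η + 4 * (μ (ball 0 (R / N)) * μ (D \ erosion (R / N) D))) < τ := by
  have hτ2 : τ / 2 ≠ 0 := by simp [hτ]
  obtain ⟨κ', hκ', hκτ⟩ := ENNReal.exists_nnreal_pos_mul_lt (a := 4 * μ (ball 0 R))
    (ENNReal.mul_ne_top (by simp) measure_ball_lt_top.ne) hτ2
  obtain ⟨N, hN, hlt⟩ := exists_nat_measure_sdiff_erosion_lt hD hDtop hR
    (lt_min (pos_iff_ne_zero.2 hκ) (ENNReal.coe_pos.2 hκ'))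
  obtain ⟨η, hη, hητ⟩ := ENNReal.exists_nnreal_pos_mul_lt
    (a := N ^ Module.finrank ℝ E * (8 * N)) (by finiteness) hτ2
  have hball : N ^ Module.finrank ℝ E * μ (ball 0 (R / N)) = μ (ball 0 R) := by
    have hN' : (0 : ℝ) < N := by positivity
    have h := μ.addHaar_ball_mul_of_pos 0 hN' (R / N)
    rw [mul_div_cancel₀ _ hN'.ne', ENNReal.ofReal_pow hN'.le, ENNReal.ofReal_natCast] at h
    exact h.symm
  refine ⟨N, hN, hlt.trans_le (min_le_left _ _), η, by simpa using hη.ne', by simp, ?_⟩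
  calc _ = η * (N ^ Module.finrank ℝ E * (8 * N)) + μ (D \ erosion (R / N) D) *
          (4 * (N ^ Module.finrank ℝ E * μ (ball 0 (R / N)))) := by ring
    _ < τ / 2 + τ / 2 := by
        rw [hball]
        refine ENNReal.add_lt_add hητ (hκτ.trans_le' ?_)
        gcongr
        exact hlt.le.trans (min_le_right _ _)
    _ = τ := ENNReal.add_halves τ

end Erosion

section Characters
variable {E : Type*} [NormedAddCommGroup E] [InnerProductSpace ℝ E] [FiniteDimensional ℝ E]
  [MeasurableSpace E] [BorelSpace E] {D D' S : Set E}

theorem exists_setLIntegral_setLIntegral_edist_div_exp_sq_le (hD : Convex ℝ D)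
    (hDm : MeasurableSet D) (hDtop : volume D ≠ ∞) (hD' : MeasurableSet D')
    (hD'D : D' ⊆ D) (hS : MeasurableSet S) (hStop : volume S ≠ ∞)
    (hD'S : ∀ x ∈ D', ∀ s ∈ S, x + s ∈ D) {N : ℕ} (hN : N ≠ 0)
    (hDS : ∀ x ∈ D, ∀ s, x + (N : ℝ) • s ∈ D → s ∈ S) {f g : E → Circle} (hf : Measurable f)
    (hg : Measurable g) {η : ℝ≥0∞} (hη : η ≠ ∞)
    (herr : ∫⁻ s in S, ∫⁻ x, incrementError D f s (g s) x < η) :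
    ∃ ξ : E, ∫⁻ x in D, ∫⁻ y in D, edist (f y / f x) (Circle.exp ⟪y - x, ξ⟫) ^ 2 ≤
      N ^ Module.finrank ℝ E * (8 * N * η + 4 * (volume S * volume (D \ D'))) := by
  have hN0 : (N : ℝ≥0∞) ≠ 0 := Nat.cast_ne_zero.2 hN
  have herr_pow : ∫⁻ s in S, ∫⁻ x, incrementError D (f ^ N) s ((g ^ N) s) x < N * η := by
    refine lt_of_le_of_lt ?_ ((ENNReal.mul_lt_mul_iff_right hN0 (by finiteness)).2 herr)
    simp_rw [← lintegral_const_mul' _ _ (ENNReal.natCast_ne_top N)]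
    exact lintegral_mono fun s => lintegral_mono fun x => incrementError_pow_le N
  obtain ⟨ξ, hξ⟩ := exists_lintegral_edist_exp_sq_le hDm hDtop hD' hS hStop (hf.pow_const N)
    (hg.pow_const N) hD'D hD'S (by finiteness) herr_pow
  have hscale (s : E) : ⟪(N : ℝ) • s, (N : ℝ)⁻¹ • ξ⟫ = ⟪s, ξ⟫ := by
    rw [inner_smul_left, inner_smul_right, RCLike.conj_to_real,
      mul_inv_cancel_left₀ (Nat.cast_ne_zero.2 hN)]
  refine ⟨(N : ℝ)⁻¹ • ξ, (setLIntegral_setLIntegral_edist_div_sq_le hD hDm hf hg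
    (χ := fun t => Circle.exp ⟪t, (N : ℝ)⁻¹ • ξ⟫) (by fun_prop) hN hDS).trans ?_⟩
  simp_rw [hscale, mul_assoc 2 (volume D)]
  gcongr _ * ?_
  calc _ ≤ 4 * N * η + 2 * (2 * (volume S * volume (D \ D') + N * η)) :=
        add_le_add (mul_le_mul_right herr.le _) (mul_le_mul_right hξ _)
    _ = _ := by ring

theorem exists_setLIntegral_edist_mul_exp_sq_lt (hD0 : volume D ≠ 0)
    (hDtop : volume D ≠ ∞) {f : E → Circle} (hf : Measurable f) {ξ : E} {ε : ℝ≥0∞}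
    (h : ∫⁻ x in D, ∫⁻ y in D, edist (f y / f x) (Circle.exp ⟪y - x, ξ⟫) ^ 2 < ε * volume D) :
    ∃ c : Circle, ∫⁻ y in D, edist (f y) (c * Circle.exp ⟪y, ξ⟫) ^ 2 < ε := by
  have hmeas : Measurable fun p : E × E =>
      edist (f p.2 / f p.1) (Circle.exp ⟪p.2 - p.1, ξ⟫) ^ 2 := by fun_prop
  obtain ⟨x, -, hx⟩ := exists_le_setLAverage hD0 hDtop
    (hmeas.lintegral_prod_right' (ν := volume.restrict D)).aemeasurable
  refine ⟨f x / Circle.exp ⟪x, ξ⟫, ?_⟩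
  calc _ = ∫⁻ y in D, edist (f y / f x) (Circle.exp ⟪y - x, ξ⟫) ^ 2 := by
        refine lintegral_congr fun y => ?_
        rw [inner_sub_left, Circle.exp_sub, ← edist_mul_right (f y / f x) _ (f x)]
        congr 2
        · rw [div_mul_cancel]
        · rw [div_mul_eq_mul_div, div_mul_eq_mul_div, mul_comm]
    _ ≤ _ := hx
    _ < ε := by
        rw [setLAverage_eq]
        exact (ENNReal.div_lt_iff (.inl hD0) (.inl hDtop)).2 h

theorem exists_pos_forall_exists_setLIntegral_edist_mul_exp_sq_lt (hD : Convex ℝ D)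
    (hDo : IsOpen D) (hDb : Bornology.IsBounded D) (hDne : D.Nonempty) {ε : ℝ≥0∞} (hε : ε ≠ 0) :
    ∃ δ : ℝ, 0 < δ ∧ ∀ (f : E → Circle) (h : E → ℂ), Measurable f → Measurable h →
      volume (exceptionalSet D f h δ) ≤ ENNReal.ofReal δ →
      ∃ (ξ : E) (c : Circle), ∫⁻ y in D, edist (f y) (c * Circle.exp ⟪y, ξ⟫) ^ 2 < ε := by
  have hD0 : volume D ≠ 0 := (hDo.measure_pos volume hDne).ne'
  have hDtop : volume D ≠ ∞ := hDb.measure_lt_top.ne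
  obtain ⟨R, hR, hDR⟩ := (hDb.sub hDb).exists_pos_norm_lt
  obtain ⟨N, hN, hκ, η, hη, hηtop, hsmall⟩ :=
    exists_nat_mul_measure_sdiff_erosion_lt hDo hDtop hR hD0 (mul_ne_zero hε hD0)
  have hN' : (0 : ℝ) < N := by positivity
  have hD'D : erosion (R / N) D ⊆ D := erosion_subset (div_pos hR hN')
  have hD' : MeasurableSet (erosion (R / N) D) := measurableSet_erosion _
  have hD'S : ∀ x ∈ erosion (R / N) D, ∀ s ∈ ball 0 (R / N), x + s ∈ D := fun x hx s hs =>
    add_mem_of_mem_erosion hx hs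
  have hDS : ∀ x ∈ D, ∀ s, x + (N : ℝ) • s ∈ D → s ∈ ball 0 (R / N) := fun x hx s hxs => by
    have h := hDR _ (Set.sub_mem_sub hxs hx)
    rw [add_sub_cancel_left, norm_smul, Real.norm_natCast] at h
    rwa [mem_ball_zero_iff, lt_div_iff₀' hN']
  have hD'0 : volume (erosion (R / N) D) ≠ 0 := fun h0 => by
    simp [measure_sdiff_null h0] at hκ
  obtain ⟨δ, hδ, hincrement⟩ := exists_pos_forall_lintegral_incrementError_lt hDo.measurableSet
    hDtop measurableSet_ball measure_ball_lt_top.ne hD' hD'D hD'S hD'0 hη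
  refine ⟨δ, hδ, fun f h hf hh hexc => ?_⟩
  obtain ⟨g, hg, herr⟩ := hincrement f h hf hh hexc
  obtain ⟨ξ, hξ⟩ := exists_setLIntegral_setLIntegral_edist_div_exp_sq_le hD hDo.measurableSet
    hDtop hD' hD'D measurableSet_ball measure_ball_lt_top.ne hD'S hN hDS hf hg hηtop herr
  exact ⟨ξ, exists_setLIntegral_edist_mul_exp_sq_lt hD0 hDtop hf (hξ.trans_lt hsmall)⟩

end Characters

theorem approximate_character_general {E : Type*} [NormedAddCommGroup E] [InnerProductSpace ℝ E]
    [FiniteDimensional ℝ E] [MeasurableSpace E] [BorelSpace E] {D : Set E} (hD : Convex ℝ D)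
    (hDo : IsOpen D) (hDb : Bornology.IsBounded D) (hDne : D.Nonempty) {ε : ℝ} (hε : 0 < ε) :
    ∃ δ : ℝ, 0 < δ ∧ ∀ (ψ : E → ℝ) (h : E → ℂ), Measurable ψ → Measurable h →
      volume {p : E × E | p.1 ∈ D ∧ p.2 ∈ D ∧
        δ < ‖Complex.exp (Complex.I * ((ψ p.1 + ψ p.2 : ℝ) : ℂ)) - h (p.1 + p.2)‖} <
          ENNReal.ofReal δ →
      ∃ (ξ : E) (c : ℂ), ‖c‖ = 1 ∧
        eLpNorm (fun x => Complex.exp (Complex.I * ((ψ x : ℝ) : ℂ)) -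
          c * Complex.exp (Complex.I * ((⟪x, ξ⟫ : ℝ) : ℂ))) 2 (volume.restrict D) <
            ENNReal.ofReal ε := by
  obtain ⟨δ, hδ, hcharacter⟩ := exists_pos_forall_exists_setLIntegral_edist_mul_exp_sq_lt hD hDo
    hDb hDne (pow_ne_zero 2 (ENNReal.ofReal_pos.2 hε).ne')
  refine ⟨δ, hδ, fun ψ h hψ hh hexc => ?_⟩
  have hset : exceptionalSet D (fun x => Circle.exp (ψ x)) h δ = {p : E × E | p.1 ∈ D ∧ p.2 ∈ D ∧
      δ < ‖Complex.exp (Complex.I * ((ψ p.1 + ψ p.2 : ℝ) : ℂ)) - h (p.1 + p.2)‖} := by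
    simp only [exceptionalSet, Circle.coe_exp, ← Complex.exp_add, ← add_mul, mul_comm Complex.I,
      Complex.ofReal_add]
  obtain ⟨ξ, c, hlt⟩ := hcharacter _ h (Circle.exp.continuous.measurable.comp hψ) hh
    (hset ▸ hexc.le)
  refine ⟨ξ, c, Circle.norm_coe c, ?_⟩
  rw [eLpNorm_eq_lintegral_rpow_enorm_toReal two_ne_zero ENNReal.ofNat_ne_top,
    ENNReal.toReal_ofNat, one_div, ENNReal.rpow_inv_lt_iff two_pos]
  simpa only [Function.comp_apply, circle_edist_eq_enorm_sub, Circle.coe_mul, Circle.coe_exp,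
    mul_comm Complex.I, ENNReal.rpow_ofNat] using hlt

/-- **Characterization of approximate characters.** Let `D ⊂ ℝ^d` be a bounded open ball.
For any `ε > 0` there exists `δ > 0` with the following property: if `ψ : D → ℝ` and
`h : D+D → ℂ` are measurable functions such that the Lebesgue measure of
`{(x,y) ∈ D×D : |e^{i[ψ(x)+ψ(y)]} - h(x+y)| > δ}` is less than `δ`, then there exist
`ξ ∈ ℝ^d` and `c ∈ ℂ` with `|c| = 1` such that `‖e^{iψ(x)} - c e^{i x·ξ}‖_{L²(D)} < ε`. -/
theorem approximate_character (d : ℕ) (x₀ : EuclideanSpace ℝ (Fin d)) (r : ℝ) (hr : 0 < r)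
    (ε : ℝ) (hε : 0 < ε) :
    ∃ δ : ℝ, 0 < δ ∧
      ∀ (ψ : EuclideanSpace ℝ (Fin d) → ℝ) (h : EuclideanSpace ℝ (Fin d) → ℂ),
        Measurable ψ → Measurable h →
        (volume : Measure (EuclideanSpace ℝ (Fin d) × EuclideanSpace ℝ (Fin d)))
          {p | p.1 ∈ ball x₀ r ∧ p.2 ∈ ball x₀ r ∧
            δ < ‖Complex.exp (Complex.I * ((ψ p.1 + ψ p.2 : ℝ) : ℂ)) - h (p.1 + p.2)‖}
          < ENNReal.ofReal δ →
        ∃ (ξ : EuclideanSpace ℝ (Fin d)) (c : ℂ), ‖c‖ = 1 ∧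
          eLpNorm
            (fun x => Complex.exp (Complex.I * ((ψ x : ℝ) : ℂ))
              - c * Complex.exp (Complex.I * ((⟪x, ξ⟫ : ℝ) : ℂ)))
            2 (volume.restrict (ball x₀ r)) < ENNReal.ofReal ε :=
  approximate_character_general (convex_ball x₀ r) isOpen_ball isBounded_ball (nonempty_ball.2 hr)
    hε

end
end
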